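/- arXiv:2207.13935 — 4 statements merged into one kernel-verified Lean document; each statement's English description precedes it below -/
import Mathlib

section
/- Let F be a functor of Artin rings. (a) If F is smooth, then for every obstruction theory (V, v_e) for F, all the obstruction maps v_e are identically zero. (b) Conversely, if F admits a complete obstruction theory all of whose obstruction maps are identically zero, then F is smooth. -/
open CategoryTheory

universe u

/-- The category `Art_K` of commutative local Artinian `K`-algebras with residue field `K`. -/
structure ArtinAlg (K : Type u) [Field K] : Type (u + 1) where
  carrier : Type u
  [commRing : CommRing carrier]
  [algebra : Algebra K carrier]
  [artinian : IsArtinianRing carrier]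
  [localRing : IsLocalRing carrier]
  residue_bij : Function.Bijective
    ((IsLocalRing.residue carrier).comp (algebraMap K carrier))

attribute [instance] ArtinAlg.commRing ArtinAlg.algebra ArtinAlg.artinian ArtinAlg.localRing

instance (K : Type u) [Field K] : CoeSort (ArtinAlg K) (Type u) :=
  ⟨ArtinAlg.carrier⟩

instance (K : Type u) [Field K] : Category (ArtinAlg K) where
  Hom A B := A.carrier →ₐ[K] B.carrier
  id A := AlgHom.id K A.carrier
  comp f g := g.comp f

/-- Morphisms in `Art_K` are `K`-algebra homomorphisms. -/
def ArtinAlg.Hom.toAlgHom {K : Type u} [Field K] {A B : ArtinAlg K} (f : A ⟶ B) :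
    A.carrier →ₐ[K] B.carrier := f

instance {K : Type u} [Field K] {A B : ArtinAlg K} : FunLike (A ⟶ B) A B :=
  inferInstanceAs (FunLike (A.carrier →ₐ[K] B.carrier) A B)

instance {K : Type u} [Field K] {A B : ArtinAlg K} : AlgHomClass (A ⟶ B) K A B :=
  inferInstanceAs (AlgHomClass (A.carrier →ₐ[K] B.carrier) K A B)

/-- The field `K` itself, as the (terminal/initial) object of `Art_K`. -/
def ArtinAlg.self (K : Type u) [Field K] : ArtinAlg K where
  carrier := K
  residue_bij := by
    constructor
    · exact RingHom.injective _
    · intro y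
      obtain ⟨x, hx⟩ := Ideal.Quotient.mk_surjective (I := IsLocalRing.maximalIdeal K) y
      exact ⟨x, hx⟩

/-- A functor of Artin rings: a covariant functor `F : Art_K ⥤ Set` with `F(K)` a one-point
set. -/
def IsFunctorOfArtinRings {K : Type u} [Field K] (F : ArtinAlg K ⥤ Type u) : Prop :=
  Nonempty (F.obj (ArtinAlg.self K)) ∧ Subsingleton (F.obj (ArtinAlg.self K))

/-- Smoothness of a functor of Artin rings: `F(B) → F(A)` is surjective for every surjection
`B → A` in `Art_K`. -/
def IsSmoothFunctor {K : Type u} [Field K] (F : ArtinAlg K ⥤ Type u) : Prop :=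
  ∀ (B A : ArtinAlg K) (f : B ⟶ A), Function.Surjective f → Function.Surjective (F.map f)

/-- Smoothness of a morphism of functors of Artin rings: for every surjection `B → A` in
`Art_K` the induced map `F(B) → G(B) ×_{G(A)} F(A)` is surjective. -/
def IsSmoothMorphism {K : Type u} [Field K] {F G : ArtinAlg K ⥤ Type u} (φ : F ⟶ G) : Prop :=
  ∀ (B A : ArtinAlg K) (f : B ⟶ A), Function.Surjective f →
    ∀ (gb : G.obj B) (fa : F.obj A), G.map f gb = φ.app A fa →
      ∃ fb : F.obj B, φ.app B fb = gb ∧ F.map f fb = fa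
/-- A small extension `e : 0 → J → B → A → 0` in `Art_K`: a surjection `π : B → A` whose
kernel `J` is annihilated by the maximal ideal `m_B`. -/
structure SmallExtension (K : Type u) [Field K] where
  B : ArtinAlg K
  A : ArtinAlg K
  π : B ⟶ A
  surj : Function.Surjective π
  small : ∀ x : B, π x = 0 → ∀ y ∈ IsLocalRing.maximalIdeal B.carrier, y * x = 0

/-- The kernel `J` of a small extension, as a `K`-vector space. -/
def SmallExtension.J {K : Type u} [Field K] (e : SmallExtension K) :
    Submodule K e.B.carrier :=
  Submodule.restrictScalars K (RingHom.ker (ArtinAlg.Hom.toAlgHom e.π).toRingHom)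

/-- The map induced on the kernels by a morphism of small extensions. -/
def SmallExtension.kerMap {K : Type u} [Field K] {e₁ e₂ : SmallExtension K}
    (αB : e₁.B ⟶ e₂.B) (αA : e₁.A ⟶ e₂.A) (hc : αB ≫ e₂.π = e₁.π ≫ αA) :
    e₁.J →ₗ[K] e₂.J where
  toFun x := ⟨αB x.1, by
    have hx : e₁.π x.1 = 0 := by
      have hx0 := x.2
      simp only [SmallExtension.J, Submodule.restrictScalars_mem, RingHom.mem_ker] at hx0
      exact hx0
    have h' : e₂.π (αB x.1) = αA (e₁.π x.1) := DFunLike.congr_fun hc x.1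
    simp only [SmallExtension.J, Submodule.restrictScalars_mem, RingHom.mem_ker]
    show e₂.π (αB x.1) = 0
    rw [h', hx, map_zero]⟩
  map_add' x y := by
    ext
    exact map_add (ArtinAlg.Hom.toAlgHom αB) x.1 y.1
  map_smul' c x := by
    ext
    exact map_smul (ArtinAlg.Hom.toAlgHom αB).toLinearMap c x.1

/-- An obstruction theory `(V, v_e)` for a functor of Artin rings `F`. -/
structure ObstructionTheory {K : Type u} [Field K] (F : ArtinAlg K ⥤ Type u) :
    Type (u + 1) where
  V : Type u
  [addCommGroup : AddCommGroup V]
  [module : Module K V]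
  ob : ∀ e : SmallExtension K, F.obj e.A → TensorProduct K V e.J
  ob_eq_zero_of_lifts : ∀ (e : SmallExtension K) (a : F.obj e.A),
    (∃ b : F.obj e.B, F.map e.π b = a) → ob e a = 0
  base_change : ∀ (e₁ e₂ : SmallExtension K) (αB : e₁.B ⟶ e₂.B) (αA : e₁.A ⟶ e₂.A)
    (hc : αB ≫ e₂.π = e₁.π ≫ αA) (a : F.obj e₁.A),
    ob e₂ (F.map αA a) = LinearMap.lTensor V (SmallExtension.kerMap αB αA hc) (ob e₁ a)

attribute [instance] ObstructionTheory.addCommGroup ObstructionTheory.module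

/-- Completeness of an obstruction theory: an element lifts iff its obstruction vanishes. -/
def ObstructionTheory.Complete {K : Type u} [Field K] {F : ArtinAlg K ⥤ Type u}
    (OT : ObstructionTheory F) : Prop :=
  ∀ (e : SmallExtension K) (a : F.obj e.A), OT.ob e a = 0 → ∃ b : F.obj e.B, F.map e.π b = a

namespace ArtinAlg

variable {K : Type u} [Field K]

theorem mk_mem_maximalIdeal_iff {R : Type*} [CommRing R] [IsLocalRing R] (I : Ideal R)
    [IsLocalRing (R ⧸ I)] (b : R) :
    Ideal.Quotient.mk I b ∈ IsLocalRing.maximalIdeal (R ⧸ I) ↔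
      b ∈ IsLocalRing.maximalIdeal R := by
  have := IsLocalHom.of_surjective (Ideal.Quotient.mk I) Ideal.Quotient.mk_surjective
  simp only [IsLocalRing.mem_maximalIdeal, mem_nonunits_iff, isUnit_map_iff]

/-- The quotient of an object of `Art_K` by a proper ideal. -/
def quotient (B : ArtinAlg K) (I : Ideal B.carrier) (hI : I ≠ ⊤) : ArtinAlg K :=
  haveI : Nontrivial (B.carrier ⧸ I) := Ideal.Quotient.nontrivial_iff.mpr hI
  haveI : IsLocalRing (B.carrier ⧸ I) :=
    IsLocalRing.of_surjective' (Ideal.Quotient.mk I) Ideal.Quotient.mk_surjective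
  { carrier := B.carrier ⧸ I
    residue_bij := by
      refine ⟨RingHom.injective _, fun y => ?_⟩
      obtain ⟨c, rfl⟩ := IsLocalRing.residue_surjective y
      obtain ⟨b, rfl⟩ := Ideal.Quotient.mk_surjective c
      obtain ⟨k, hk⟩ := B.residue_bij.2 (IsLocalRing.residue B.carrier b)
      refine ⟨k, Ideal.Quotient.eq.mpr ?_⟩
      exact (mk_mem_maximalIdeal_iff I (algebraMap K B.carrier k - b)).mpr
        (Ideal.Quotient.eq.mp hk) }

end ArtinAlg

/-- If all small extensions induce surjections under `F`, then so does every surjection in `Art_K`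
whose kernel is annihilated by a power of the maximal ideal. -/
theorem map_surjective_of_pow_mul_ker_eq_bot {K : Type u} [Field K] (F : ArtinAlg K ⥤ Type u)
    (hsmall : ∀ e : SmallExtension K, Function.Surjective (F.map e.π)) (n : ℕ)
    {B A : ArtinAlg K} (f : B ⟶ A) (hf : Function.Surjective f)
    (hn : IsLocalRing.maximalIdeal B.carrier ^ n *
      RingHom.ker (ArtinAlg.Hom.toAlgHom f) = ⊥) :
    Function.Surjective (F.map f) := by
  induction n generalizing A with
  | zero =>
    refine hsmall ⟨B, A, f, hf, fun x hx y _ => ?_⟩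
    have hx' : x ∈ RingHom.ker (ArtinAlg.Hom.toAlgHom f) := hx
    rw [pow_zero, one_mul] at hn
    rw [hn, Ideal.mem_bot] at hx'
    rw [hx', mul_zero]
  | succ n ih =>
    let m := IsLocalRing.maximalIdeal B.carrier
    let I : Ideal B.carrier := m * RingHom.ker (ArtinAlg.Hom.toAlgHom f)
    have hI : I ≠ ⊤ := fun h =>
      (IsLocalRing.maximalIdeal.isMaximal B.carrier).ne_top (top_le_iff.mp (h ▸ Ideal.mul_le_left))
    let C := B.quotient I hI
    let p : B ⟶ C := Ideal.Quotient.mkₐ K I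
    let q : C ⟶ A := Ideal.Quotient.liftₐ I (ArtinAlg.Hom.toAlgHom f)
      (fun a ha => RingHom.mem_ker.mp (Ideal.mul_le_right ha))
    have hpq : p ≫ q = f := AlgHom.ext fun _ => rfl
    have hp : Function.Surjective (F.map p) := by
      refine ih p Ideal.Quotient.mk_surjective ?_
      have hker : RingHom.ker (ArtinAlg.Hom.toAlgHom p) = I := Ideal.Quotient.mkₐ_ker K I
      rw [hker, ← mul_assoc, ← pow_succ, hn]
    have hq : Function.Surjective (F.map q) := by
      refine hsmall ⟨C, A, q, fun a => ?_, fun x hx y hy => ?_⟩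
      · obtain ⟨b, rfl⟩ := hf a
        exact ⟨p b, rfl⟩
      · obtain ⟨x, rfl⟩ := Ideal.Quotient.mk_surjective x
        obtain ⟨y, rfl⟩ := Ideal.Quotient.mk_surjective y
        have : IsLocalRing (B.carrier ⧸ I) := C.localRing
        exact Ideal.Quotient.eq_zero_iff_mem.mpr
          (Ideal.mul_mem_mul ((ArtinAlg.mk_mem_maximalIdeal_iff I y).mp hy) hx)
    rw [← hpq, F.map_comp]
    exact hq.comp hp

/-- A functor is smooth as soon as small extensions induce surjections. -/
theorem isSmoothFunctor_of_smallExtension {K : Type u} [Field K] (F : ArtinAlg K ⥤ Type u)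
    (hsmall : ∀ e : SmallExtension K, Function.Surjective (F.map e.π)) : IsSmoothFunctor F := by
  intro B A f hf
  obtain ⟨n, hn⟩ := IsArtinianRing.isNilpotent_jacobson_bot (R := B.carrier)
  rw [IsLocalRing.jacobson_eq_maximalIdeal ⊥ bot_ne_top] at hn
  refine map_surjective_of_pow_mul_ker_eq_bot F hsmall n f hf ?_
  rw [hn, Submodule.zero_eq_bot, Ideal.bot_mul]

/-- Let `F` be a functor of Artin rings. (a) If `F` is smooth, then every
obstruction theory for `F` has all its obstruction maps identically zero. (b) Conversely, if
`F` admits a complete obstruction theory all of whose obstruction maps are identically zero,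
then `F` is smooth. -/
theorem smooth_iff_obstruction_vanish {K : Type u} [Field K]
    (F : ArtinAlg K ⥤ Type u) (hF : IsFunctorOfArtinRings F) :
    (IsSmoothFunctor F →
      ∀ (OT : ObstructionTheory F) (e : SmallExtension K) (a : F.obj e.A), OT.ob e a = 0) ∧
    ((∃ OT : ObstructionTheory F, OT.Complete ∧
        ∀ (e : SmallExtension K) (a : F.obj e.A), OT.ob e a = 0) →
      IsSmoothFunctor F) := by
  refine ⟨fun h OT e a => OT.ob_eq_zero_of_lifts e a (h e.B e.A e.π e.surj a), ?_⟩
  rintro ⟨OT, hOT, hzero⟩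
  exact isSmoothFunctor_of_smallExtension F fun e a => hOT e a (hzero e a)
end

section
/- Let φ : F → G be a morphism of functors of Artin rings with G a deformation functor. (a) If φ is smooth, then for every relative obstruction theory (V, v_e) for φ, all the relative obstruction maps v_e are identically zero. (b) Conversely, if φ admits a complete relative obstruction theory all of whose maps are identically zero, then φ is smooth. -/
open CategoryTheory

universe u

/-- `(D, p, q)` realizes the fiber product `B ×_A C` in `Art_K` (stated concretely on
underlying algebras). -/
structure IsFiberProductCone {K : Type u} [Field K] {A B C D : ArtinAlg K}
    (f : B ⟶ A) (g : C ⟶ A) (p : D ⟶ B) (q : D ⟶ C) : Prop where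
  comm : ∀ d : D, f (p d) = g (q d)
  inj : ∀ d₁ d₂ : D, p d₁ = p d₂ → q d₁ = q d₂ → d₁ = d₂
  surj : ∀ (b : B) (c : C), f b = g c → ∃ d : D, p d = b ∧ q d = c

/-- A deformation functor: a functor of Artin rings such that the natural map
`η : F(B ×_A C) → F(B) ×_{F(A)} F(C)` is surjective whenever `B → A` is surjective, and
bijective whenever `A = K`. -/
structure IsDeformationFunctor {K : Type u} [Field K] (F : ArtinAlg K ⥤ Type u) : Prop where
  nonempty_pt : Nonempty (F.obj (ArtinAlg.self K))
  subsingleton_pt : Subsingleton (F.obj (ArtinAlg.self K))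
  eta_surjective : ∀ {A B C D : ArtinAlg K} (f : B ⟶ A) (g : C ⟶ A) (p : D ⟶ B) (q : D ⟶ C),
    IsFiberProductCone f g p q → Function.Surjective f →
    ∀ (x : F.obj B) (y : F.obj C), F.map f x = F.map g y →
      ∃ d : F.obj D, F.map p d = x ∧ F.map q d = y
  eta_bijective : ∀ {B C D : ArtinAlg K} (f : B ⟶ ArtinAlg.self K)
    (g : C ⟶ ArtinAlg.self K) (p : D ⟶ B) (q : D ⟶ C),
    IsFiberProductCone f g p q →
    ∀ (x : F.obj B) (y : F.obj C), F.map f x = F.map g y →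
      ∃! d : F.obj D, F.map p d = x ∧ F.map q d = y
lemma SmallExtension.rel_compat {K : Type u} [Field K] {F G : ArtinAlg K ⥤ Type u}
    (φ : F ⟶ G) {e₁ e₂ : SmallExtension K} (αB : e₁.B ⟶ e₂.B) (αA : e₁.A ⟶ e₂.A)
    (hc : αB ≫ e₂.π = e₁.π ≫ αA) (a : F.obj e₁.A) (β : G.obj e₁.B)
    (h : G.map e₁.π β = φ.app e₁.A a) :
    G.map e₂.π (G.map αB β) = φ.app e₂.A (F.map αA a) := by
  have h1 : G.map e₂.π (G.map αB β) = G.map αA (G.map e₁.π β) := by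
    rw [← FunctorToTypes.map_comp_apply, ← FunctorToTypes.map_comp_apply, hc]
  rw [h1, h]
  exact (NatTrans.naturality_apply φ αA a).symm

/-- A relative obstruction theory `(V, v_e)` for a morphism `φ : F → G` of functors of Artin
rings: for every small extension `e : 0 → J → B → A → 0`, a map
`v_e : F(A) ×_{G(A)} G(B) → V ⊗_K J` vanishing on pairs that lift to `F(B)` and compatible
with base change along morphisms of small extensions. -/
structure RelObstructionTheory {K : Type u} [Field K] {F G : ArtinAlg K ⥤ Type u}
    (φ : F ⟶ G) : Type (u + 1) where
  V : Type u
  [addCommGroup : AddCommGroup V]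
  [module : Module K V]
  ob : ∀ (e : SmallExtension K) (a : F.obj e.A) (β : G.obj e.B),
    G.map e.π β = φ.app e.A a → TensorProduct K V e.J
  ob_eq_zero_of_lifts : ∀ (e : SmallExtension K) (a : F.obj e.A) (β : G.obj e.B)
    (h : G.map e.π β = φ.app e.A a),
    (∃ b : F.obj e.B, F.map e.π b = a ∧ φ.app e.B b = β) → ob e a β h = 0
  base_change : ∀ (e₁ e₂ : SmallExtension K) (αB : e₁.B ⟶ e₂.B) (αA : e₁.A ⟶ e₂.A)
    (hc : αB ≫ e₂.π = e₁.π ≫ αA) (a : F.obj e₁.A) (β : G.obj e₁.B)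
    (h : G.map e₁.π β = φ.app e₁.A a),
    ob e₂ (F.map αA a) (G.map αB β) (SmallExtension.rel_compat φ αB αA hc a β h) =
      LinearMap.lTensor V (SmallExtension.kerMap αB αA hc) (ob e₁ a β h)

attribute [instance] RelObstructionTheory.addCommGroup RelObstructionTheory.module

/-- Completeness of a relative obstruction theory. -/
def RelObstructionTheory.Complete {K : Type u} [Field K] {F G : ArtinAlg K ⥤ Type u}
    {φ : F ⟶ G} (ROT : RelObstructionTheory φ) : Prop :=
  ∀ (e : SmallExtension K) (a : F.obj e.A) (β : G.obj e.B)
    (h : G.map e.π β = φ.app e.A a), ROT.ob e a β h = 0 →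
    ∃ b : F.obj e.B, F.map e.π b = a ∧ φ.app e.B b = β

/-- The quotient of an object of `Art_K` by a proper ideal. -/
def ArtinAlg.quotient_s4 {K : Type u} [Field K] (B : ArtinAlg K) (I : Ideal B.carrier)
    (hI : I ≠ ⊤) : ArtinAlg K :=
  haveI : Nontrivial (B.carrier ⧸ I) := Ideal.Quotient.nontrivial_iff.mpr hI
  haveI : IsLocalRing (B.carrier ⧸ I) :=
    IsLocalRing.of_surjective' (Ideal.Quotient.mk I) Ideal.Quotient.mk_surjective
  { carrier := B.carrier ⧸ I
    residue_bij := by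
      refine ⟨RingHom.injective _, fun y => ?_⟩
      obtain ⟨z, rfl⟩ := IsLocalRing.residue_surjective y
      obtain ⟨b, rfl⟩ := Ideal.Quotient.mk_surjective z
      obtain ⟨k, hk⟩ := B.residue_bij.2 (IsLocalRing.residue B.carrier b)
      have : IsLocalHom (Ideal.Quotient.mk I) :=
        IsLocalHom.of_surjective _ Ideal.Quotient.mk_surjective
      exact ⟨k, congrArg (IsLocalRing.ResidueField.map (Ideal.Quotient.mk I)) hk⟩ }

/-- The projection of an object of `Art_K` onto a quotient. -/
def ArtinAlg.quotientMk {K : Type u} [Field K] (B : ArtinAlg K) (I : Ideal B.carrier)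
    (hI : I ≠ ⊤) : B ⟶ B.quotient_s4 I hI :=
  Ideal.Quotient.mkₐ K I

/-- The morphism out of a quotient induced by a morphism killing the ideal. -/
def ArtinAlg.quotientLift {K : Type u} [Field K] {A B : ArtinAlg K} (I : Ideal B.carrier)
    (hI : I ≠ ⊤) (f : B ⟶ A) (hf : ∀ x ∈ I, f x = 0) : B.quotient_s4 I hI ⟶ A :=
  Ideal.Quotient.liftₐ I (ArtinAlg.Hom.toAlgHom f) hf

/-- Every ideal of an Artinian local algebra is annihilated by a power of the maximal ideal, so
a lifting property along small extensions extends to all surjections. -/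
lemma isSmoothMorphism_of_smallExtension {K : Type u} [Field K] {F G : ArtinAlg K ⥤ Type u}
    (φ : F ⟶ G)
    (H : ∀ (e : SmallExtension K) (a : F.obj e.A) (β : G.obj e.B),
      G.map e.π β = φ.app e.A a → ∃ b : F.obj e.B, F.map e.π b = a ∧ φ.app e.B b = β) :
    IsSmoothMorphism φ := by
  suffices key : ∀ (n : ℕ) (B A : ArtinAlg K) (f : B ⟶ A), Function.Surjective f →
      (IsLocalRing.maximalIdeal B.carrier ^ n *
        RingHom.ker (ArtinAlg.Hom.toAlgHom f).toRingHom = ⊥) →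
      ∀ (gb : G.obj B) (fa : F.obj A), G.map f gb = φ.app A fa →
        ∃ fb : F.obj B, φ.app B fb = gb ∧ F.map f fb = fa by
    intro B A f hf
    obtain ⟨n, hn⟩ := IsArtinianRing.isNilpotent_jacobson_bot (R := B.carrier)
    rw [IsLocalRing.jacobson_eq_maximalIdeal ⊥ bot_ne_top] at hn
    exact key n B A f hf (by rw [hn]; exact Ideal.bot_mul _)
  intro n
  induction n with
  | zero =>
    intro B A f hf h0 gb fa hg
    rw [pow_zero, Ideal.one_eq_top, Ideal.top_mul] at h0
    obtain ⟨b, h1, h2⟩ := H ⟨B, A, f, hf, fun x hx y _ => by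
      have hx0 : x ∈ (⊥ : Ideal B.carrier) := h0 ▸ (RingHom.mem_ker.mpr hx)
      rw [Ideal.mem_bot.mp hx0, mul_zero]⟩ fa gb hg
    exact ⟨b, h2, h1⟩
  | succ n ih =>
    intro B A f hf h0 gb fa hg
    set m := IsLocalRing.maximalIdeal B.carrier
    set J := RingHom.ker (ArtinAlg.Hom.toAlgHom f).toRingHom
    have hIJ : m ^ n * J ≤ J := Ideal.mul_le_right
    have hI : m ^ n * J ≠ ⊤ := fun h =>
      RingHom.ker_ne_top (ArtinAlg.Hom.toAlgHom f).toRingHom (top_le_iff.mp (h ▸ hIJ))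
    let p := B.quotientMk _ hI
    let q := ArtinAlg.quotientLift _ hI f fun x hx => RingHom.mem_ker.mp (hIJ hx)
    have hpq : p ≫ q = f := rfl
    have hp : Function.Surjective p := Ideal.Quotient.mk_surjective
    have hq : Function.Surjective q := fun a => by
      obtain ⟨b, rfl⟩ := hf a
      exact ⟨p b, rfl⟩
    have hmax : IsLocalRing.maximalIdeal (B.quotient_s4 _ hI).carrier ≤
        m.map (Ideal.Quotient.mk (m ^ n * J)) := fun y hy => by
      obtain ⟨b, rfl⟩ := hp y
      refine Ideal.mem_map_of_mem _ ?_
      exact fun hb => hy (hb.map (Ideal.Quotient.mk (m ^ n * J)))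
    have hker : RingHom.ker (ArtinAlg.Hom.toAlgHom q).toRingHom ≤
        J.map (Ideal.Quotient.mk (m ^ n * J)) := fun y hy => by
      obtain ⟨b, rfl⟩ := hp y
      exact Ideal.mem_map_of_mem _ hy
    have hbot : IsLocalRing.maximalIdeal (B.quotient_s4 _ hI).carrier ^ n *
        RingHom.ker (ArtinAlg.Hom.toAlgHom q).toRingHom = ⊥ := by
      refine le_bot_iff.mp ((Ideal.mul_mono (Ideal.pow_right_mono hmax n) hker).trans ?_)
      have := Ideal.map_quotient_self (m ^ n * J)
      rw [Ideal.map_mul, Ideal.map_pow] at this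
      exact this.le
    obtain ⟨c, hc, hca⟩ := ih _ A q hq hbot (G.map p gb) fa (by
      rw [← Functor.map_comp_apply, hpq, hg])
    obtain ⟨b, hb, hbg⟩ := H ⟨B, _, p, hp, fun x hx y hy => by
      have hx' : x ∈ m ^ n * J := Ideal.Quotient.eq_zero_iff_mem.mp hx
      have hxy : y * x ∈ m ^ (n + 1) * J := by
        rw [pow_succ', mul_assoc]
        exact Ideal.mul_mem_mul hy hx'
      rw [h0] at hxy
      exact hxy⟩ c gb hc.symm
    refine ⟨b, hbg, ?_⟩
    rw [← hca, ← hb, ← Functor.map_comp_apply]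
    rfl

/-- Let `φ : F → G` be a morphism of functors of Artin rings with `G` a
deformation functor. (a) If `φ` is smooth, then every relative obstruction theory for `φ` has
all its obstruction maps identically zero. (b) Conversely, if `φ` admits a complete relative
obstruction theory all of whose maps are identically zero, then `φ` is smooth. -/
theorem smoothMorphism_iff_relObstruction_vanish {K : Type u} [Field K]
    {F G : ArtinAlg K ⥤ Type u} (hF : IsFunctorOfArtinRings F)
    (hG : IsDeformationFunctor G) (φ : F ⟶ G) :
    (IsSmoothMorphism φ →
      ∀ (ROT : RelObstructionTheory φ) (e : SmallExtension K) (a : F.obj e.A)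
        (β : G.obj e.B) (h : G.map e.π β = φ.app e.A a), ROT.ob e a β h = 0) ∧
    ((∃ ROT : RelObstructionTheory φ, ROT.Complete ∧
        ∀ (e : SmallExtension K) (a : F.obj e.A) (β : G.obj e.B)
          (h : G.map e.π β = φ.app e.A a), ROT.ob e a β h = 0) →
      IsSmoothMorphism φ) := by
  refine ⟨fun hφ ROT e a β h => ROT.ob_eq_zero_of_lifts e a β h ?_, ?_⟩
  · obtain ⟨b, hb, hba⟩ := hφ e.B e.A e.π e.surj β a h
    exact ⟨b, hba, hb⟩
  · rintro ⟨ROT, hc, h0⟩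
    exact isSmoothMorphism_of_smallExtension φ fun e a β h => hc e a β h (h0 e a β h)
end

section
/- Let F be a deformation functor over Art_K. Then the set t_F = F(K[ε]), equipped with the addition given by the composite F(K[ε]) × F(K[ε]) ≅ F(K[ε] ×_K K[ε]) → F(K[ε]) (the inverse of the bijection η followed by F applied to the K-algebra map sending both ε₁ and ε₂ to ε), the scalar multiplication by a ∈ K given by F applied to the K-algebra map ε ↦ aε, and zero element the image of F(K) under F(K → K[ε]), is a K-vector space. -/
open CategoryTheory

universe u

open TrivSqZeroExt in
/-- A trivial square-zero extension `K ⊕ M` of a field `K` by a finite-dimensional vector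
space `M`, as an object of `Art_K`. -/
noncomputable def ArtinAlg.tszeObj (K : Type u) [Field K] (M : Type u) [AddCommGroup M]
    [Module K M] [Module Kᵐᵒᵖ M] [IsCentralScalar K M] [Module.Finite K M] :
    ArtinAlg K :=
  letI instArt : IsArtinianRing (TrivSqZeroExt K M) := by
    have : Module.Finite K (TrivSqZeroExt K M) :=
      inferInstanceAs (Module.Finite K (K × M))
    exact IsArtinianRing.of_finite K (TrivSqZeroExt K M)
  letI instLoc : IsLocalRing (TrivSqZeroExt K M) := by
    refine IsLocalRing.of_isUnit_or_isUnit_one_sub_self fun a => ?_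
    rcases eq_or_ne a.fst 0 with h | h
    · right
      rw [isUnit_iff_isUnit_fst]
      simp [h]
    · left
      rw [isUnit_iff_isUnit_fst]
      exact h.isUnit
  { carrier := TrivSqZeroExt K M
    residue_bij := by
      constructor
      · exact RingHom.injective _
      · intro y
        obtain ⟨x, hx⟩ := Ideal.Quotient.mk_surjective
          (I := IsLocalRing.maximalIdeal (TrivSqZeroExt K M)) y
        refine ⟨x.fst, ?_⟩
        have hmem : (inr x.snd : TrivSqZeroExt K M) ∈
            IsLocalRing.maximalIdeal (TrivSqZeroExt K M) := by
          rw [IsLocalRing.mem_maximalIdeal, mem_nonunits_iff, isUnit_iff_isUnit_fst, fst_inr]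
          exact not_isUnit_zero
        have h0 : (IsLocalRing.residue (TrivSqZeroExt K M)) (inr x.snd) = 0 :=
          Ideal.Quotient.eq_zero_iff_mem.2 hmem
        have hxeq : (algebraMap K (TrivSqZeroExt K M)) x.fst = x - inr x.snd := by
          rw [TrivSqZeroExt.algebraMap_eq_inl]
          exact eq_sub_of_add_eq (inl_fst_add_inr_snd_eq x)
        show (IsLocalRing.residue (TrivSqZeroExt K M)) ((algebraMap K _) x.fst) = y
        rw [hxeq, map_sub, h0, sub_zero]
        exact hx }
/-- The ring of dual numbers `K[ε]` as an object of `Art_K`. -/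
noncomputable def ArtinAlg.eps (K : Type u) [Field K] : ArtinAlg K :=
  ArtinAlg.tszeObj K K

/-- The ring `K[ε₁, ε₂]/(ε₁, ε₂)²`, i.e. the fiber product `K[ε] ×_K K[ε]`, as an object of
`Art_K`. -/
noncomputable def ArtinAlg.epsSq (K : Type u) [Field K] : ArtinAlg K :=
  ArtinAlg.tszeObj K (K × K)

/-- The first projection `K[ε₁, ε₂]/(ε₁, ε₂)² → K[ε]`, `ε₁ ↦ ε, ε₂ ↦ 0`. -/
noncomputable def ArtinAlg.pr1 (K : Type u) [Field K] : ArtinAlg.epsSq K ⟶ ArtinAlg.eps K :=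
  TrivSqZeroExt.map (LinearMap.fst K K K)

/-- The second projection `K[ε₁, ε₂]/(ε₁, ε₂)² → K[ε]`, `ε₁ ↦ 0, ε₂ ↦ ε`. -/
noncomputable def ArtinAlg.pr2 (K : Type u) [Field K] : ArtinAlg.epsSq K ⟶ ArtinAlg.eps K :=
  TrivSqZeroExt.map (LinearMap.snd K K K)

/-- The addition map `K[ε₁, ε₂]/(ε₁, ε₂)² → K[ε]` sending both `ε₁` and `ε₂` to `ε`. -/
noncomputable def ArtinAlg.addMap (K : Type u) [Field K] :
    ArtinAlg.epsSq K ⟶ ArtinAlg.eps K :=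
  TrivSqZeroExt.map (LinearMap.fst K K K + LinearMap.snd K K K)

/-- The scaling map `K[ε] → K[ε]`, `ε ↦ a • ε`. -/
noncomputable def ArtinAlg.scaleMap (K : Type u) [Field K] (a : K) :
    ArtinAlg.eps K ⟶ ArtinAlg.eps K :=
  TrivSqZeroExt.map (a • LinearMap.id)

/-- The unit map `K → K[ε]`. -/
noncomputable def ArtinAlg.unitMap (K : Type u) [Field K] :
    ArtinAlg.self K ⟶ ArtinAlg.eps K :=
  Algebra.ofId K (DualNumber K)

/-- The projection `K[ε] → K`, `ε ↦ 0`. -/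
noncomputable def ArtinAlg.projMap (K : Type u) [Field K] :
    ArtinAlg.eps K ⟶ ArtinAlg.self K :=
  TrivSqZeroExt.fstHom K K K

namespace ArtinAlg

variable {K : Type u} [Field K]

section tszeMap

variable {M N P : Type u}
  [AddCommGroup M] [Module K M] [Module Kᵐᵒᵖ M] [IsCentralScalar K M] [Module.Finite K M]
  [AddCommGroup N] [Module K N] [Module Kᵐᵒᵖ N] [IsCentralScalar K N] [Module.Finite K N]
  [AddCommGroup P] [Module K P] [Module Kᵐᵒᵖ P] [IsCentralScalar K P] [Module.Finite K P]

/-- The morphism of square-zero extensions `K ⊕ M ⟶ K ⊕ N` induced by a linear map. -/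
noncomputable def tszeMap (f : M →ₗ[K] N) : tszeObj K M ⟶ tszeObj K N :=
  TrivSqZeroExt.map f

/-- The augmentation `K ⊕ M ⟶ K`. -/
noncomputable def tszeProj (K : Type u) [Field K] (M : Type u) [AddCommGroup M]
    [Module K M] [Module Kᵐᵒᵖ M] [IsCentralScalar K M] [Module.Finite K M] :
    tszeObj K M ⟶ ArtinAlg.self K :=
  TrivSqZeroExt.fstHom K K M

theorem tszeMap_id : tszeMap (LinearMap.id : M →ₗ[K] M) = 𝟙 (tszeObj K M) :=
  TrivSqZeroExt.map_id

theorem tszeMap_comp (f : M →ₗ[K] N) (g : N →ₗ[K] P) :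
    tszeMap (g ∘ₗ f) = tszeMap f ≫ tszeMap g :=
  TrivSqZeroExt.map_comp_map f g

theorem tszeMap_zero : tszeMap (0 : M →ₗ[K] K) = tszeProj K M ≫ unitMap K := by
  refine TrivSqZeroExt.algHom_ext (R' := K) (M := M) (A := TrivSqZeroExt K K) fun m => ?_
  change TrivSqZeroExt.map (0 : M →ₗ[K] K) (TrivSqZeroExt.inr m) =
    algebraMap K (TrivSqZeroExt K K) (TrivSqZeroExt.fst (TrivSqZeroExt.inr m : TrivSqZeroExt K M))
  simp

theorem isFiberProductCone_tsze :
    IsFiberProductCone (tszeProj K M) (tszeProj K N)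
      (tszeMap (LinearMap.fst K M N)) (tszeMap (LinearMap.snd K M N)) where
  comm (d : TrivSqZeroExt K (M × N)) :=
    (TrivSqZeroExt.fst_map (LinearMap.fst K M N) d).trans
      (TrivSqZeroExt.fst_map (LinearMap.snd K M N) d).symm
  inj (d₁ d₂ : TrivSqZeroExt K (M × N)) h₁ h₂ := by
    change TrivSqZeroExt.map (LinearMap.fst K M N) d₁ =
      TrivSqZeroExt.map (LinearMap.fst K M N) d₂ at h₁
    change TrivSqZeroExt.map (LinearMap.snd K M N) d₁ =
      TrivSqZeroExt.map (LinearMap.snd K M N) d₂ at h₂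
    have e₁ := congrArg TrivSqZeroExt.fst h₁
    have e₂ := congrArg TrivSqZeroExt.snd h₁
    have e₃ := congrArg TrivSqZeroExt.snd h₂
    simp only [TrivSqZeroExt.fst_map, TrivSqZeroExt.snd_map, LinearMap.fst_apply,
      LinearMap.snd_apply] at e₁ e₂ e₃
    exact TrivSqZeroExt.ext e₁ (Prod.ext e₂ e₃)
  surj (b : TrivSqZeroExt K M) (c : TrivSqZeroExt K N) (h : b.fst = c.fst) := by
    refine ⟨((b.fst, (b.snd, c.snd)) : TrivSqZeroExt K (M × N)), ?_, ?_⟩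
    · exact TrivSqZeroExt.ext (TrivSqZeroExt.fst_map ..) (TrivSqZeroExt.snd_map ..)
    · exact TrivSqZeroExt.ext ((TrivSqZeroExt.fst_map ..).trans h) (TrivSqZeroExt.snd_map ..)

end tszeMap

end ArtinAlg

namespace IsDeformationFunctor

open ArtinAlg

variable {K : Type u} [Field K] {F : ArtinAlg K ⥤ Type u}

section Product

variable {M N : Type u}
  [AddCommGroup M] [Module K M] [Module Kᵐᵒᵖ M] [IsCentralScalar K M] [Module.Finite K M]
  [AddCommGroup N] [Module K N] [Module Kᵐᵒᵖ N] [IsCentralScalar K N] [Module.Finite K N]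

theorem existsUnique_tsze_prod (hF : IsDeformationFunctor F)
    (x : F.obj (tszeObj K M)) (y : F.obj (tszeObj K N)) :
    ∃! d : F.obj (tszeObj K (M × N)),
      F.map (tszeMap (LinearMap.fst K M N)) d = x ∧
        F.map (tszeMap (LinearMap.snd K M N)) d = y :=
  hF.eta_bijective _ _ _ _ isFiberProductCone_tsze x y (hF.subsingleton_pt.elim _ _)

theorem map_tszeMap_comp {P : Type u} [AddCommGroup P] [Module K P] [Module Kᵐᵒᵖ P]
    [IsCentralScalar K P] [Module.Finite K P] (f : M →ₗ[K] N) (g : N →ₗ[K] P)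
    (d : F.obj (tszeObj K M)) :
    F.map (tszeMap g) (F.map (tszeMap f) d) = F.map (tszeMap (g ∘ₗ f)) d := by
  rw [tszeMap_comp, F.map_comp]
  rfl

end Product

/-- The addition on the tangent space `F(K[ε])` of a deformation functor. -/
noncomputable def tangentAdd (hF : IsDeformationFunctor F) (x y : F.obj (eps K)) :
    F.obj (eps K) :=
  F.map (addMap K) (hF.existsUnique_tsze_prod (M := K) (N := K) x y).choose

variable {M : Type u} [AddCommGroup M] [Module K M] [Module Kᵐᵒᵖ M] [IsCentralScalar K M]
  [Module.Finite K M]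

/-- Addition on the tangent space is pointwise addition of linear functionals. -/
theorem tangentAdd_map (hF : IsDeformationFunctor F) (f g : M →ₗ[K] K)
    (d : F.obj (tszeObj K M)) :
    hF.tangentAdd (F.map (tszeMap f) d) (F.map (tszeMap g) d) = F.map (tszeMap (f + g)) d := by
  have h := hF.existsUnique_tsze_prod (M := K) (N := K) (F.map (tszeMap f) d)
    (F.map (tszeMap g) d)
  have e : h.choose = F.map (tszeMap (f.prod g)) d :=
    h.unique h.choose_spec.1 ⟨map_tszeMap_comp .., map_tszeMap_comp ..⟩
  change F.map (tszeMap (LinearMap.fst K K K + LinearMap.snd K K K)) h.choose = _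
  rw [e, map_tszeMap_comp]
  rfl

theorem map_tszeMap_zero (hF : IsDeformationFunctor F) (d : F.obj (tszeObj K M))
    (z : F.obj (ArtinAlg.self K)) :
    F.map (tszeMap (0 : M →ₗ[K] K)) d = F.map (unitMap K) z := by
  have h : F.map (tszeProj K M ≫ unitMap K) d = F.map (unitMap K) (F.map (tszeProj K M) d) := by
    rw [F.map_comp]
    rfl
  rw [tszeMap_zero]
  exact h.trans (congrArg (F.map (unitMap K)) (hF.subsingleton_pt.elim _ _))

theorem map_tszeMap_id (d : F.obj (tszeObj K M)) :
    F.map (tszeMap (LinearMap.id : M →ₗ[K] M)) d = d := by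
  rw [tszeMap_id, F.map_id]
  rfl

theorem tangentAdd_assoc (hF : IsDeformationFunctor F) (x y z : F.obj (eps K)) :
    hF.tangentAdd (hF.tangentAdd x y) z = hF.tangentAdd x (hF.tangentAdd y z) := by
  obtain ⟨e, ⟨rfl, rfl⟩, -⟩ := hF.existsUnique_tsze_prod (M := K) (N := K) y z
  obtain ⟨d, ⟨rfl, rfl⟩, -⟩ := hF.existsUnique_tsze_prod (M := K) (N := K × K) x e
  simp only [map_tszeMap_comp, tangentAdd_map, add_assoc]
  rfl

theorem tangentAdd_comm (hF : IsDeformationFunctor F) (x y : F.obj (eps K)) :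
    hF.tangentAdd x y = hF.tangentAdd y x := by
  obtain ⟨d, ⟨rfl, rfl⟩, -⟩ := hF.existsUnique_tsze_prod (M := K) (N := K) x y
  rw [tangentAdd_map, tangentAdd_map, add_comm]

theorem map_scaleMap_tangentAdd (hF : IsDeformationFunctor F) (a : K) (x y : F.obj (eps K)) :
    F.map (scaleMap K a) (hF.tangentAdd x y) =
      hF.tangentAdd (F.map (scaleMap K a) x) (F.map (scaleMap K a) y) := by
  obtain ⟨d, ⟨rfl, rfl⟩, -⟩ := hF.existsUnique_tsze_prod (M := K) (N := K) x y
  change F.map (tszeMap (a • LinearMap.id)) _ =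
    hF.tangentAdd (F.map (tszeMap (a • LinearMap.id)) _) (F.map (tszeMap (a • LinearMap.id)) _)
  simp only [map_tszeMap_comp, tangentAdd_map, LinearMap.comp_add]

theorem tangentAdd_map_scaleMap (hF : IsDeformationFunctor F) (a b : K) (x : F.obj (eps K)) :
    hF.tangentAdd (F.map (scaleMap K a) x) (F.map (scaleMap K b) x) =
      F.map (scaleMap K (a + b)) x := by
  refine (hF.tangentAdd_map _ _ x).trans ?_
  rw [← add_smul]
  rfl

theorem map_scaleMap_one (x : F.obj (eps K)) : F.map (scaleMap K 1) x = x := by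
  change F.map (tszeMap ((1 : K) • LinearMap.id)) x = x
  rw [one_smul]
  exact map_tszeMap_id x

theorem map_scaleMap_mul (a b : K) (x : F.obj (eps K)) :
    F.map (scaleMap K (a * b)) x = F.map (scaleMap K a) (F.map (scaleMap K b) x) := by
  refine Eq.trans ?_ (map_tszeMap_comp _ _ x).symm
  rw [LinearMap.smul_comp, LinearMap.id_comp, ← mul_smul]
  rfl

theorem map_scaleMap_zero (hF : IsDeformationFunctor F) (x : F.obj (eps K))
    (z : F.obj (ArtinAlg.self K)) : F.map (scaleMap K 0) x = F.map (unitMap K) z := by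
  rw [← hF.map_tszeMap_zero (M := K) x z, ← zero_smul K (LinearMap.id : K →ₗ[K] K)]
  rfl

end IsDeformationFunctor

/-- For a deformation functor `F`, the set `t_F = F(K[ε])`, equipped with
the addition obtained from the inverse of the bijection
`η : F(K[ε] ×_K K[ε]) → F(K[ε]) × F(K[ε])` followed by `F` of the map sending both `ε₁` and
`ε₂` to `ε`, the scalar multiplication by `a ∈ K` given by `F(ε ↦ aε)`, and zero element the
image of the point `F(K)` under `F(K → K[ε])`, is a `K`-vector space. -/
theorem tangentSpace_isVectorSpace {K : Type u} [Field K] (F : ArtinAlg K ⥤ Type u)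
    (hF : IsDeformationFunctor F) :
    ∃ (add : F.obj (ArtinAlg.eps K) → F.obj (ArtinAlg.eps K) → F.obj (ArtinAlg.eps K))
      (smul : K → F.obj (ArtinAlg.eps K) → F.obj (ArtinAlg.eps K))
      (zero : F.obj (ArtinAlg.eps K)),
      -- `add` is the prescribed addition: `add x y = F(σ)(η⁻¹(x, y))`
      (∀ x y : F.obj (ArtinAlg.eps K), ∃ d : F.obj (ArtinAlg.epsSq K),
        F.map (ArtinAlg.pr1 K) d = x ∧ F.map (ArtinAlg.pr2 K) d = y ∧
          add x y = F.map (ArtinAlg.addMap K) d) ∧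
      -- `smul` is the prescribed scalar multiplication
      (∀ (a : K) (x : F.obj (ArtinAlg.eps K)), smul a x = F.map (ArtinAlg.scaleMap K a) x) ∧
      -- `zero` is the image of the one-point set `F(K)`
      (∀ z : F.obj (ArtinAlg.self K), zero = F.map (ArtinAlg.unitMap K) z) ∧
      -- the `K`-vector space axioms
      (∀ x y z, add (add x y) z = add x (add y z)) ∧
      (∀ x y, add x y = add y x) ∧
      (∀ x, add zero x = x) ∧
      (∀ x, ∃ y, add x y = zero) ∧
      (∀ x, smul (1 : K) x = x) ∧
      (∀ (a b : K) x, smul (a * b) x = smul a (smul b x)) ∧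
      (∀ (a : K) x y, smul a (add x y) = add (smul a x) (smul a y)) ∧
      (∀ (a b : K) x, add (smul a x) (smul b x) = smul (a + b) x) := by
  obtain ⟨pt⟩ := hF.nonempty_pt
  refine ⟨hF.tangentAdd, fun a => F.map (ArtinAlg.scaleMap K a), F.map (ArtinAlg.unitMap K) pt,
    fun x y => ?_, fun _ _ => rfl, fun z => ?_, hF.tangentAdd_assoc, hF.tangentAdd_comm,
    fun x => ?_, fun x => ⟨F.map (ArtinAlg.scaleMap K (-1)) x, ?_⟩,
    IsDeformationFunctor.map_scaleMap_one, IsDeformationFunctor.map_scaleMap_mul,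
    hF.map_scaleMap_tangentAdd, hF.tangentAdd_map_scaleMap⟩
  · have h := hF.existsUnique_tsze_prod (M := K) (N := K) x y
    exact ⟨h.choose, h.choose_spec.1.1, h.choose_spec.1.2, rfl⟩
  · exact congrArg _ (hF.subsingleton_pt.elim _ _)
  · have h := hF.tangentAdd_map_scaleMap 0 1 x
    rwa [zero_add, IsDeformationFunctor.map_scaleMap_one, hF.map_scaleMap_zero x pt] at h
  · have h := hF.tangentAdd_map_scaleMap 1 (-1) x
    rwa [add_neg_cancel, IsDeformationFunctor.map_scaleMap_one, hF.map_scaleMap_zero x pt] at h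
end

section
/- Let F be a deformation functor over Art_K. Then there exists a universal obstruction theory (O_F, ob_e) for F. Moreover, the universal obstruction theory is complete, and every element of the vector space O_F is of the form ob_e(a) for some small extension e : 0 → K → B → A → 0 with one-dimensional kernel and some a ∈ F(A). -/
open CategoryTheory

universe u

/-- A morphism of obstruction theories `(V, v_e) → (W, w_e)`: a linear map `ψ : V → W` with
`w_e = (ψ ⊗ id_J) ∘ v_e` for every small extension `e`. -/
def ObstructionTheory.IsMorphism {K : Type u} [Field K] {F : ArtinAlg K ⥤ Type u}
    (OT OT' : ObstructionTheory F) (ψ : OT.V →ₗ[K] OT'.V) : Prop :=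
  ∀ (e : SmallExtension K) (a : F.obj e.A),
    OT'.ob e a = LinearMap.rTensor (↥e.J) ψ (OT.ob e a)

namespace ArtinAlg

variable {K : Type u} [Field K]

theorem comp_apply {A B C : ArtinAlg K} (f : A ⟶ B) (g : B ⟶ C) (x : A) :
    (f ≫ g) x = g (f x) := rfl

theorem hom_ext {A B : ArtinAlg K} {f g : A ⟶ B} (h : ∀ x, f x = g x) : f = g :=
  AlgHom.ext h

/-- A `K`-algebra homomorphism, regarded as a morphism of `Art_K`. -/
def ofAlgHom {A B : ArtinAlg K} (f : A.carrier →ₐ[K] B.carrier) : A ⟶ B := f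

/-- The augmentation `A → A / m_A = K`. -/
noncomputable def aug (A : ArtinAlg K) : A.carrier →ₐ[K] K :=
  ((AlgEquiv.ofBijective (Algebra.ofId K (IsLocalRing.ResidueField A.carrier))
    A.residue_bij).symm : _ →ₐ[K] K).comp
    (IsScalarTower.toAlgHom K A.carrier (IsLocalRing.ResidueField A.carrier))

theorem aug_eq_zero_iff (A : ArtinAlg K) (x : A) :
    A.aug x = 0 ↔ x ∈ IsLocalRing.maximalIdeal A.carrier := by
  rw [← IsLocalRing.residue_eq_zero_iff]
  exact EmbeddingLike.map_eq_zero_iff (f := (AlgEquiv.ofBijective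
    (Algebra.ofId K (IsLocalRing.ResidueField A.carrier)) A.residue_bij).symm)

theorem isUnit_of_aug_ne_zero {A : ArtinAlg K} {x : A} (h : A.aug x ≠ 0) : IsUnit x := by
  by_contra hx
  exact h ((A.aug_eq_zero_iff x).2 hx)

theorem aug_eq_zero_of_isNilpotent {A : ArtinAlg K} {x : A} (h : IsNilpotent x) :
    A.aug x = 0 :=
  (h.map A.aug).eq_zero

theorem aug_map {A B : ArtinAlg K} (f : A ⟶ B) (x : A) : B.aug (f x) = A.aug x := by
  have hx : IsNilpotent (x - algebraMap K A.carrier (A.aug x)) := by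
    obtain ⟨n, hn⟩ := IsArtinianRing.isNilpotent_jacobson_bot (R := A.carrier)
    refine ⟨n, ?_⟩
    rw [IsLocalRing.jacobson_eq_maximalIdeal _ bot_ne_top] at hn
    have := Ideal.pow_mem_pow ((A.aug_eq_zero_iff (x - algebraMap K A.carrier (A.aug x))).1
      (by simp)) n
    rwa [hn] at this
  have h := aug_eq_zero_of_isNilpotent (A := B) (hx.map f)
  rw [map_sub, AlgHomClass.commutes, map_sub, AlgHom.commutes, sub_eq_zero] at h
  exact h

instance finite (A : ArtinAlg K) : Module.Finite K A.carrier := by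
  have h : Module.Finite K (A.carrier ⧸ Ring.jacobson A.carrier) := by
    rw [IsLocalRing.ringJacobson_eq_maximalIdeal]
    exact Module.Finite.of_surjective
      (Algebra.linearMap K (A.carrier ⧸ IsLocalRing.maximalIdeal A.carrier)) A.residue_bij.2
  exact IsSemiprimaryRing.finite_of_isArtinian K A.carrier A.carrier

/-- A finite-dimensional augmented algebra in which elements of nonzero augmentation are
invertible is an object of `Art_K`. -/
def ofAug (R : Type u) [CommRing R] [Algebra K R] [Module.Finite K R] (ε : R →ₐ[K] K)
    (h : ∀ x, ε x ≠ 0 → IsUnit x) : ArtinAlg K :=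
  haveI : IsLocalHom ε.toRingHom := ⟨fun x hx => h x hx.ne_zero⟩
  haveI : IsLocalRing R := RingHom.domain_isLocalRing ε.toRingHom
  { carrier := R
    artinian := IsArtinianRing.of_finite K R
    residue_bij := by
      refine ⟨RingHom.injective _, fun y => ?_⟩
      obtain ⟨x, rfl⟩ := IsLocalRing.residue_surjective y
      refine ⟨ε x, ?_⟩
      rw [RingHom.comp_apply, ← sub_eq_zero, ← map_sub, IsLocalRing.residue_eq_zero_iff,
        IsLocalRing.mem_maximalIdeal]
      intro hu
      exact (hu.map ε).ne_zero (by simp) }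

/-- The augmentation, as a morphism of `Art_K`. -/
noncomputable def augHom (A : ArtinAlg K) : A ⟶ ArtinAlg.self K := A.aug

/-- The underlying algebra of `B ×_K C`. -/
noncomputable abbrev prodSubalgebra (B C : ArtinAlg K) : Subalgebra K (B.carrier × C.carrier) :=
  AlgHom.equalizer (B.aug.comp (AlgHom.fst K B.carrier C.carrier))
    (C.aug.comp (AlgHom.snd K B.carrier C.carrier))

/-- The fiber product `B ×_K C`. -/
noncomputable def prod (B C : ArtinAlg K) : ArtinAlg K :=
  haveI : Module.Finite K (prodSubalgebra B C) :=
    inferInstanceAs (Module.Finite K (Subalgebra.toSubmodule (prodSubalgebra B C)))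
  ofAug (prodSubalgebra B C)
    ((B.aug.comp (AlgHom.fst K B.carrier C.carrier)).comp (prodSubalgebra B C).val) <| by
    rintro ⟨⟨b, c⟩, hbc⟩ h
    replace hbc : B.aug b = C.aug c := hbc
    replace h : B.aug b ≠ 0 := h
    obtain ⟨b', hb⟩ := (isUnit_of_aug_ne_zero h).exists_right_inv
    obtain ⟨c', hc⟩ := (isUnit_of_aug_ne_zero (hbc ▸ h)).exists_right_inv
    have hb' : B.aug b * B.aug b' = 1 := by rw [← map_mul, hb, map_one]
    have hc' : B.aug b * C.aug c' = 1 := by rw [hbc, ← map_mul, hc, map_one]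
    refine IsUnit.of_mul_eq_one ⟨(b', c'), mul_left_cancel₀ h (hb'.trans hc'.symm)⟩ ?_
    exact Subtype.ext (Prod.ext hb hc)

variable {A B C : ArtinAlg K}

/-- The first projection of `B ×_K C`. -/
noncomputable def prodFst (B C : ArtinAlg K) : prod B C ⟶ B :=
  ((AlgHom.fst K B.carrier C.carrier).comp (prodSubalgebra B C).val :
    prodSubalgebra B C →ₐ[K] B.carrier)

/-- The second projection of `B ×_K C`. -/
noncomputable def prodSnd (B C : ArtinAlg K) : prod B C ⟶ C :=
  ((AlgHom.snd K B.carrier C.carrier).comp (prodSubalgebra B C).val :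
    prodSubalgebra B C →ₐ[K] C.carrier)

/-- The morphism to `B ×_K C` with given components. -/
noncomputable def prodLift (f : A ⟶ B) (g : A ⟶ C) : A ⟶ prod B C :=
  (((Hom.toAlgHom f).prod (Hom.toAlgHom g)).codRestrict (prodSubalgebra B C)
    fun x => (aug_map f x).trans (aug_map g x).symm : A.carrier →ₐ[K] prodSubalgebra B C)

theorem prod_ext {x y : prod B C} (h₁ : prodFst B C x = prodFst B C y)
    (h₂ : prodSnd B C x = prodSnd B C y) : x = y :=
  Subtype.ext (Prod.ext h₁ h₂)

theorem exists_prod (b : B) (c : C) (h : B.aug b = C.aug c) :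
    ∃ d : prod B C, prodFst B C d = b ∧ prodSnd B C d = c :=
  ⟨⟨(b, c), h⟩, rfl, rfl⟩

theorem isFiberProductCone_prod (B C : ArtinAlg K) :
    IsFiberProductCone B.augHom C.augHom (prodFst B C) (prodSnd B C) where
  comm d := (aug_map (prodFst B C) d).trans (aug_map (prodSnd B C) d).symm
  inj _ _ := prod_ext
  surj := exists_prod

theorem exists_desc {A Q C : ArtinAlg K} (q : A ⟶ Q) (hq : Function.Surjective q) (f : A ⟶ C)
    (h : ∀ x, q x = 0 → f x = 0) : ∃ g : Q ⟶ C, q ≫ g = f :=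
  ⟨AlgHom.liftOfSurjective (Hom.toAlgHom q) hq (Hom.toAlgHom f) h,
    AlgHom.liftOfSurjective_comp (Hom.toAlgHom q) hq (Hom.toAlgHom f) h⟩

end ArtinAlg

namespace SmallExtension

variable {K : Type u} [Field K]

theorem mem_J {e : SmallExtension K} {x : e.B} : x ∈ e.J ↔ e.π x = 0 := Iff.rfl

instance (e : SmallExtension K) : Module.Finite K e.J := inferInstance

theorem mul_eq_aug_smul (e : SmallExtension K) (y : e.B) {x : e.B} (hx : x ∈ e.J) :
    y * x = e.B.aug y • x := by
  have h := e.small x hx (y - algebraMap K e.B.carrier (e.B.aug y))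
    ((e.B.aug_eq_zero_iff _).1 (by simp))
  rwa [sub_mul, sub_eq_zero, ← Algebra.smul_def] at h

/-- Smallness can be tested with the augmentation. -/
def ofAugSmall (B A : ArtinAlg K) (π : B ⟶ A) (surj : Function.Surjective π)
    (small : ∀ x : B, π x = 0 → ∀ y : B, B.aug y = 0 → y * x = 0) : SmallExtension K :=
  ⟨B, A, π, surj, fun x hx y hy => small x hx y ((B.aug_eq_zero_iff y).2 hy)⟩

/-- A morphism of small extensions. -/
structure Mor (e₁ e₂ : SmallExtension K) where
  αB : e₁.B ⟶ e₂.B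
  αA : e₁.A ⟶ e₂.A
  hc : αB ≫ e₂.π = e₁.π ≫ αA

namespace Mor

variable {e₁ e₂ e₃ : SmallExtension K}

theorem comm_apply (α : Mor e₁ e₂) (x : e₁.B) : e₂.π (α.αB x) = α.αA (e₁.π x) :=
  DFunLike.congr_fun α.hc x

/-- The map induced on the kernels. -/
def ker (α : Mor e₁ e₂) : e₁.J →ₗ[K] e₂.J := kerMap α.αB α.αA α.hc

theorem coe_ker (α : Mor e₁ e₂) (x : e₁.J) : (α.ker x : e₂.B) = α.αB x := rfl

/-- The identity morphism. -/
def id (e : SmallExtension K) : Mor e e := ⟨𝟙 _, 𝟙 _, rfl⟩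

/-- Composition of morphisms. -/
def comp (α : Mor e₁ e₂) (β : Mor e₂ e₃) : Mor e₁ e₃ :=
  ⟨α.αB ≫ β.αB, α.αA ≫ β.αA, by
    rw [Category.assoc, β.hc, ← Category.assoc, α.hc, Category.assoc]⟩

end Mor

/-- The ideal of `B` given by a subspace of the kernel. -/
def ideal (e : SmallExtension K) (N : Submodule K e.J) : Ideal e.B.carrier where
  carrier := N.map e.J.subtype
  add_mem' := (N.map e.J.subtype).add_mem
  zero_mem' := (N.map e.J.subtype).zero_mem
  smul_mem' c := by
    rintro _ ⟨x, hx, rfl⟩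
    refine ⟨e.B.aug c • x, N.smul_mem _ hx, ?_⟩
    exact (e.mul_eq_aug_smul c x.2).symm

theorem mem_ideal {e : SmallExtension K} {N : Submodule K e.J} {x : e.B} :
    x ∈ e.ideal N ↔ ∃ h : x ∈ e.J, (⟨x, h⟩ : e.J) ∈ N := by
  constructor
  · rintro ⟨x, hx, rfl⟩
    exact ⟨x.2, hx⟩
  · rintro ⟨h, hx⟩
    exact ⟨⟨x, h⟩, hx, rfl⟩

theorem aug_eq_zero_of_mem_J {e : SmallExtension K} {x : e.B} (h : x ∈ e.J) :
    e.B.aug x = 0 := by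
  rw [← ArtinAlg.aug_map e.π, mem_J.1 h, map_zero]

/-- The quotient of `B` by a subspace of the kernel. -/
noncomputable def quotB (e : SmallExtension K) (N : Submodule K e.J) : ArtinAlg K :=
  haveI : Module.Finite K (e.B.carrier ⧸ e.ideal N) :=
    Module.Finite.of_surjective (Ideal.Quotient.mkₐ K (e.ideal N)).toLinearMap
      Ideal.Quotient.mk_surjective
  ArtinAlg.ofAug (e.B.carrier ⧸ e.ideal N)
    (Ideal.Quotient.liftₐ (e.ideal N) e.B.aug fun _ hx =>
      aug_eq_zero_of_mem_J (mem_ideal.1 hx).1) <| by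
    intro x hx
    obtain ⟨x, rfl⟩ := Ideal.Quotient.mk_surjective x
    exact (ArtinAlg.isUnit_of_aug_ne_zero (A := e.B) hx).map _

/-- The quotient map onto `quotB`. -/
noncomputable def quotMk (e : SmallExtension K) (N : Submodule K e.J) : e.B ⟶ e.quotB N :=
  (Ideal.Quotient.mkₐ K (e.ideal N) : e.B.carrier →ₐ[K] e.B.carrier ⧸ e.ideal N)

theorem quotMk_surjective (e : SmallExtension K) (N : Submodule K e.J) :
    Function.Surjective (e.quotMk N) :=
  Ideal.Quotient.mk_surjective

theorem quotMk_eq_zero_iff {e : SmallExtension K} {N : Submodule K e.J} {x : e.B} :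
    e.quotMk N x = 0 ↔ ∃ h : x ∈ e.J, (⟨x, h⟩ : e.J) ∈ N :=
  Ideal.Quotient.eq_zero_iff_mem.trans mem_ideal

/-- The projection of the quotient extension. -/
noncomputable def quotπ (e : SmallExtension K) (N : Submodule K e.J) : e.quotB N ⟶ e.A :=
  (Ideal.Quotient.liftₐ (e.ideal N) (ArtinAlg.Hom.toAlgHom e.π) fun _ hx => (mem_ideal.1 hx).1 :
    e.B.carrier ⧸ e.ideal N →ₐ[K] e.A.carrier)

theorem quotMk_quotπ (e : SmallExtension K) (N : Submodule K e.J) :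
    e.quotMk N ≫ e.quotπ N = e.π := rfl

/-- The quotient of a small extension by a subspace of its kernel. -/
noncomputable def quot (e : SmallExtension K) (N : Submodule K e.J) : SmallExtension K :=
  ofAugSmall (e.quotB N) e.A (e.quotπ N)
    (fun a => (e.surj a).elim fun b hb => ⟨e.quotMk N b, hb⟩) <| by
    intro x hx y hy
    obtain ⟨x, rfl⟩ := e.quotMk_surjective N x
    obtain ⟨y, rfl⟩ := e.quotMk_surjective N y
    rw [ArtinAlg.aug_map] at hy
    have hx' : x ∈ e.J := hx
    rw [← map_mul, e.mul_eq_aug_smul y hx', hy, zero_smul, map_zero]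

/-- The quotient morphism of small extensions. -/
noncomputable def toQuot (e : SmallExtension K) (N : Submodule K e.J) : Mor e (e.quot N) :=
  ⟨e.quotMk N, 𝟙 _, rfl⟩

theorem toQuot_ker_surjective (e : SmallExtension K) (N : Submodule K e.J) :
    Function.Surjective (e.toQuot N).ker := by
  rintro ⟨y, hy⟩
  obtain ⟨x, rfl⟩ := e.quotMk_surjective N y
  exact ⟨⟨x, hy⟩, rfl⟩

theorem ker_toQuot_ker (e : SmallExtension K) (N : Submodule K e.J) :
    LinearMap.ker (e.toQuot N).ker = N := by
  ext x
  rw [LinearMap.mem_ker, ← Subtype.coe_inj]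
  refine quotMk_eq_zero_iff.trans ⟨fun ⟨_, h⟩ => h, fun h => ⟨x.2, h⟩⟩

/-- The product `B₁ ×_K B₂ → A₁ ×_K A₂` of two small extensions. -/
noncomputable def prod (e₁ e₂ : SmallExtension K) : SmallExtension K :=
  ofAugSmall (ArtinAlg.prod e₁.B e₂.B) (ArtinAlg.prod e₁.A e₂.A)
    (ArtinAlg.prodLift (ArtinAlg.prodFst _ _ ≫ e₁.π) (ArtinAlg.prodSnd _ _ ≫ e₂.π))
    (by
      intro a
      obtain ⟨b₁, h₁⟩ := e₁.surj (ArtinAlg.prodFst _ _ a)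
      obtain ⟨b₂, h₂⟩ := e₂.surj (ArtinAlg.prodSnd _ _ a)
      obtain ⟨b, hb₁, hb₂⟩ := ArtinAlg.exists_prod b₁ b₂ (by
        rw [← ArtinAlg.aug_map e₁.π, ← ArtinAlg.aug_map e₂.π, h₁, h₂, ArtinAlg.aug_map,
          ArtinAlg.aug_map])
      refine ⟨b, ArtinAlg.prod_ext ?_ ?_⟩
      · exact (congrArg e₁.π hb₁).trans h₁
      · exact (congrArg e₂.π hb₂).trans h₂)
    (by
      intro x hx y hy
      have hx₁ : e₁.π (ArtinAlg.prodFst _ _ x) = 0 :=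
        (congrArg (ArtinAlg.prodFst _ _) hx).trans (map_zero _)
      have hx₂ : e₂.π (ArtinAlg.prodSnd _ _ x) = 0 :=
        (congrArg (ArtinAlg.prodSnd _ _) hx).trans (map_zero _)
      refine ArtinAlg.prod_ext ?_ ?_
      · rw [map_mul, e₁.mul_eq_aug_smul _ hx₁, ArtinAlg.aug_map, hy, zero_smul, map_zero]
      · rw [map_mul, e₂.mul_eq_aug_smul _ hx₂, ArtinAlg.aug_map, hy, zero_smul, map_zero])

/-- The first projection of a product of small extensions. -/
noncomputable def fst (e₁ e₂ : SmallExtension K) : Mor (prod e₁ e₂) e₁ :=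
  ⟨ArtinAlg.prodFst _ _, ArtinAlg.prodFst _ _, rfl⟩

/-- The second projection of a product of small extensions. -/
noncomputable def snd (e₁ e₂ : SmallExtension K) : Mor (prod e₁ e₂) e₂ :=
  ⟨ArtinAlg.prodSnd _ _, ArtinAlg.prodSnd _ _, rfl⟩

/-- The morphism to a product of small extensions with given components. -/
noncomputable def Mor.prodLift {e e₁ e₂ : SmallExtension K} (α : Mor e e₁) (β : Mor e e₂) :
    Mor e (prod e₁ e₂) :=
  ⟨ArtinAlg.prodLift α.αB β.αB, ArtinAlg.prodLift α.αA β.αA, by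
    refine ArtinAlg.hom_ext fun x => ArtinAlg.prod_ext ?_ ?_
    · exact α.comm_apply x
    · exact β.comm_apply x⟩

variable (F : ArtinAlg K ⥤ Type u)

/-- `a ∈ F(A)` lifts to the quotient of the small extension `e` by `N ⊆ J`. -/
def Lifts (e : SmallExtension K) (a : F.obj e.A) (N : Submodule K e.J) : Prop :=
  ∃ c : F.obj (e.quotB N), F.map (e.quotπ N) c = a

variable {F}

theorem map_surjective_of_bijective {A B : ArtinAlg K} (f : A ⟶ B)
    (hf : Function.Bijective f) (b : F.obj B) : ∃ a : F.obj A, F.map f a = b := by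
  obtain ⟨g, hg⟩ := ArtinAlg.exists_desc f hf.2 (𝟙 A) fun x hx =>
    hf.1 (hx.trans (map_zero f).symm)
  refine ⟨F.map g b, ?_⟩
  have hgf : g ≫ f = 𝟙 B := ArtinAlg.hom_ext fun y => by
    obtain ⟨x, rfl⟩ := hf.2 y
    exact congrArg f (DFunLike.congr_fun hg x)
  rw [← F.map_comp_apply, hgf, F.map_id_apply]

theorem lifts_of_exists {e : SmallExtension K} {a : F.obj e.A}
    (h : ∃ b : F.obj e.B, F.map e.π b = a) (N : Submodule K e.J) : e.Lifts F a N := by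
  obtain ⟨b, rfl⟩ := h
  exact ⟨F.map (e.quotMk N) b, by rw [← F.map_comp_apply, quotMk_quotπ]⟩

theorem exists_of_lifts_bot {e : SmallExtension K} {a : F.obj e.A} (h : e.Lifts F a ⊥) :
    ∃ b : F.obj e.B, F.map e.π b = a := by
  obtain ⟨c, rfl⟩ := h
  obtain ⟨b, rfl⟩ := map_surjective_of_bijective (e.quotMk ⊥)
    ⟨(injective_iff_map_eq_zero _).2 fun x hx => by
      obtain ⟨h, hx⟩ := quotMk_eq_zero_iff.1 hx
      exact congrArg Subtype.val ((Submodule.mem_bot K).1 hx), e.quotMk_surjective ⊥⟩ c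
  exact ⟨b, by rw [← F.map_comp_apply, quotMk_quotπ]⟩

theorem lifts_top (e : SmallExtension K) (a : F.obj e.A) : e.Lifts F a ⊤ := by
  refine map_surjective_of_bijective (e.quotπ ⊤) ⟨(injective_iff_map_eq_zero _).2 fun x hx => ?_,
    (e.quot ⊤).surj⟩ a
  obtain ⟨x, rfl⟩ := e.quotMk_surjective ⊤ x
  exact quotMk_eq_zero_iff.2 ⟨hx, trivial⟩

theorem exists_quotMap {e₁ e₂ : SmallExtension K} (α : Mor e₁ e₂) {N₁ : Submodule K e₁.J}
    {N₂ : Submodule K e₂.J} (h : N₁ ≤ N₂.comap α.ker) :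
    ∃ g : e₁.quotB N₁ ⟶ e₂.quotB N₂, e₁.quotMk N₁ ≫ g = α.αB ≫ e₂.quotMk N₂ ∧
      g ≫ e₂.quotπ N₂ = e₁.quotπ N₁ ≫ α.αA := by
  obtain ⟨g, hg⟩ := ArtinAlg.exists_desc (e₁.quotMk N₁) (e₁.quotMk_surjective N₁)
    (α.αB ≫ e₂.quotMk N₂) fun x hx => by
      obtain ⟨hx, hN⟩ := quotMk_eq_zero_iff.1 hx
      exact quotMk_eq_zero_iff.2 ⟨(α.ker ⟨x, hx⟩).2, h hN⟩
  refine ⟨g, hg, ArtinAlg.hom_ext fun y => ?_⟩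
  obtain ⟨x, rfl⟩ := e₁.quotMk_surjective N₁ y
  exact (congrArg (e₂.quotπ N₂) (DFunLike.congr_fun hg x)).trans (α.comm_apply x)

theorem Lifts.map {e₁ e₂ : SmallExtension K} (α : Mor e₁ e₂) {a : F.obj e₁.A}
    {N₁ : Submodule K e₁.J} {N₂ : Submodule K e₂.J} (hN : N₁ ≤ N₂.comap α.ker)
    (h : e₁.Lifts F a N₁) : e₂.Lifts F (F.map α.αA a) N₂ := by
  obtain ⟨c, rfl⟩ := h
  obtain ⟨g, -, hg⟩ := exists_quotMap α hN
  exact ⟨F.map g c, by rw [← F.map_comp_apply, hg, F.map_comp_apply]⟩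

theorem Lifts.mono {e : SmallExtension K} {a : F.obj e.A} {N₁ N₂ : Submodule K e.J}
    (hN : N₁ ≤ N₂) (h : e.Lifts F a N₁) : e.Lifts F a N₂ := by
  have := h.map (Mor.id e) (N₂ := N₂) hN
  rwa [Mor.id, F.map_id_apply] at this

theorem Lifts.comap (hF : IsDeformationFunctor F) {e₁ e₂ : SmallExtension K} (α : Mor e₁ e₂)
    {a : F.obj e₁.A} {N : Submodule K e₂.J} (hN : LinearMap.range α.ker ⊔ N = ⊤)
    (h : e₂.Lifts F (F.map α.αA a) N) : e₁.Lifts F a (N.comap α.ker) := by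
  obtain ⟨c, hc⟩ := h
  obtain ⟨g, hg, hg'⟩ := exists_quotMap α (le_refl (N.comap α.ker))
  obtain ⟨d, -, hd⟩ := hF.eta_surjective (e₂.quotπ N) α.αA g (e₁.quotπ (N.comap α.ker))
    { comm := DFunLike.congr_fun hg'
      inj := fun d₁ d₂ h₁ h₂ => by
        rw [← sub_eq_zero] at h₁ h₂ ⊢
        rw [← map_sub] at h₁ h₂
        obtain ⟨x, hx⟩ := e₁.quotMk_surjective _ (d₁ - d₂)
        rw [← hx] at h₁ h₂ ⊢
        rw [← ArtinAlg.comp_apply, hg] at h₁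
        obtain ⟨_, hxN⟩ := quotMk_eq_zero_iff.1 h₁
        exact quotMk_eq_zero_iff.2 ⟨h₂, hxN⟩
      surj := fun b a hba => by
        obtain ⟨x, rfl⟩ := e₁.surj a
        obtain ⟨y, rfl⟩ := e₂.quotMk_surjective N b
        have hy : y - α.αB x ∈ e₂.J := by
          rw [mem_J, map_sub, α.comm_apply, sub_eq_zero]
          exact hba
        obtain ⟨_, ⟨j, rfl⟩, n, hn, hjn⟩ :=
          Submodule.mem_sup.1 (hN ▸ Submodule.mem_top : (⟨_, hy⟩ : e₂.J) ∈ _)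
        refine ⟨e₁.quotMk _ (x + j), ?_, ?_⟩
        · rw [← ArtinAlg.comp_apply, hg, ArtinAlg.comp_apply, ← sub_eq_zero, ← map_sub,
            quotMk_eq_zero_iff]
          have hval : (α.ker j : e₂.B) + n = y - α.αB x := congrArg Subtype.val hjn
          have : α.αB (x + j) - y = (-n : e₂.J) := by
            rw [map_add, ← Mor.coe_ker, Submodule.coe_neg, sub_eq_iff_eq_add]
            linear_combination hval
          rw [this]
          exact ⟨(-n).2, N.neg_mem hn⟩
        · rw [← ArtinAlg.comp_apply, quotMk_quotπ, map_add, mem_J.1 j.2, add_zero] }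
    (e₂.quot N).surj c a hc
  exact ⟨d, hd⟩

theorem Lifts.inf (hF : IsDeformationFunctor F) {e : SmallExtension K} {a : F.obj e.A}
    {N₁ N₂ : Submodule K e.J} (hN : N₁ ⊔ N₂ = ⊤) (h₁ : e.Lifts F a N₁) (h₂ : e.Lifts F a N₂) :
    e.Lifts F a (N₁ ⊓ N₂) := by
  obtain ⟨c₁, hc₁⟩ := h₁
  obtain ⟨c₂, hc₂⟩ := h₂
  obtain ⟨g₁, hg₁, hg₁'⟩ := exists_quotMap (Mor.id e) (inf_le_left : N₁ ⊓ N₂ ≤ N₁)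
  obtain ⟨g₂, hg₂, hg₂'⟩ := exists_quotMap (Mor.id e) (inf_le_right : N₁ ⊓ N₂ ≤ N₂)
  obtain ⟨d, hd, -⟩ := hF.eta_surjective (e.quotπ N₁) (e.quotπ N₂) g₁ g₂
    { comm := DFunLike.congr_fun (hg₁'.trans hg₂'.symm)
      inj := fun d₁ d₂ h₁ h₂ => by
        rw [← sub_eq_zero] at h₁ h₂ ⊢
        rw [← map_sub] at h₁ h₂
        obtain ⟨x, hx⟩ := e.quotMk_surjective _ (d₁ - d₂)
        rw [← hx] at h₁ h₂ ⊢
        rw [← ArtinAlg.comp_apply, hg₁] at h₁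
        rw [← ArtinAlg.comp_apply, hg₂] at h₂
        obtain ⟨hx, hx₁⟩ := quotMk_eq_zero_iff.1 h₁
        obtain ⟨_, hx₂⟩ := quotMk_eq_zero_iff.1 h₂
        exact quotMk_eq_zero_iff.2 ⟨hx, hx₁, hx₂⟩
      surj := fun b₁ b₂ hb => by
        obtain ⟨x, rfl⟩ := e.quotMk_surjective N₁ b₁
        obtain ⟨y, rfl⟩ := e.quotMk_surjective N₂ b₂
        have hxy : y - x ∈ e.J := by
          rw [mem_J, map_sub, sub_eq_zero]
          exact hb.symm
        obtain ⟨n₁, hn₁, n₂, hn₂, hn⟩ :=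
          Submodule.mem_sup.1 (hN ▸ Submodule.mem_top : (⟨_, hxy⟩ : e.J) ∈ _)
        have hval : (n₁ : e.B) + n₂ = y - x := congrArg Subtype.val hn
        refine ⟨e.quotMk _ (x + n₁), ?_, ?_⟩
        · rw [← ArtinAlg.comp_apply, hg₁, ← sub_eq_zero]
          change e.quotMk N₁ (x + n₁) - e.quotMk N₁ x = 0
          rw [← map_sub, add_sub_cancel_left]
          exact quotMk_eq_zero_iff.2 ⟨n₁.2, hn₁⟩
        · rw [← ArtinAlg.comp_apply, hg₂, ← sub_eq_zero]
          change e.quotMk N₂ (x + n₁) - e.quotMk N₂ y = 0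
          have : x + n₁ - y = (-n₂ : e.J) := by
            rw [Submodule.coe_neg]
            linear_combination hval
          rw [← map_sub, this]
          exact quotMk_eq_zero_iff.2 ⟨(-n₂).2, N₂.neg_mem hn₂⟩ }
    (e.quot N₁).surj c₁ c₂ (hc₁.trans hc₂.symm)
  refine ⟨d, ?_⟩
  rw [← hc₁, ← hd, ← F.map_comp_apply, hg₁']
  rfl

theorem exists_of_forall_lifts_ker (hF : IsDeformationFunctor F) {e : SmallExtension K}
    {a : F.obj e.A} (h : ∀ l : Module.Dual K e.J, e.Lifts F a (LinearMap.ker l)) :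
    ∃ b : F.obj e.B, F.map e.π b = a := by
  classical
  let b := Module.finBasis K e.J
  have key (s : Finset (Fin (Module.finrank K e.J))) :
      e.Lifts F a (s.inf fun i => LinearMap.ker (b.coord i)) := by
    induction s using Finset.induction_on with
    | empty => exact lifts_top e a
    | insert i s hi ih =>
      rw [Finset.inf_insert]
      refine Lifts.inf hF (eq_top_iff.2 fun x _ => ?_) (h _) ih
      refine Submodule.mem_sup.2 ⟨x - b.coord i x • b i, ?_, b.coord i x • b i, ?_, by simp⟩
      · simp
      · rw [Submodule.mem_finsetInf]
        intro j hj
        have hij : i ≠ j := fun hij => hi (hij ▸ hj)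
        simp [Finsupp.single_eq_of_ne hij.symm]
  refine exists_of_lifts_bot ((key Finset.univ).mono fun x hx => ?_)
  rw [Submodule.mem_finsetInf] at hx
  exact b.ext_elem fun i => (hx i (Finset.mem_univ i)).trans (by simp)

theorem lifts_ker_comp_iff (hF : IsDeformationFunctor F) {e₁ e₂ : SmallExtension K}
    (α : Mor e₁ e₂) (a : F.obj e₁.A) (l : Module.Dual K e₂.J) :
    e₁.Lifts F a (LinearMap.ker (l ∘ₗ α.ker)) ↔
      e₂.Lifts F (F.map α.αA a) (LinearMap.ker l) := by
  refine ⟨fun h => h.map α le_rfl, fun h => ?_⟩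
  by_cases hl : l ∘ₗ α.ker = 0
  · rw [hl, LinearMap.ker_zero]
    exact lifts_top e₁ a
  · obtain ⟨x, hx⟩ := DFunLike.ne_iff.1 hl
    replace hx : l (α.ker x) ≠ 0 := hx
    rw [LinearMap.ker_comp]
    refine Lifts.comap hF α (eq_top_iff.2 fun y _ => ?_) h
    refine Submodule.mem_sup.2 ⟨_, ⟨(l y / l (α.ker x)) • x, rfl⟩,
      y - (l y / l (α.ker x)) • α.ker x, ?_, by simp⟩
    simp [hx]

/-- The functionals on the kernel whose associated quotient extension `a` lifts to. -/
def liftable (hF : IsDeformationFunctor F) (e : SmallExtension K) (a : F.obj e.A) :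
    Submodule K (Module.Dual K e.J) where
  carrier := {l | e.Lifts F a (LinearMap.ker l)}
  zero_mem' := by
    simpa using lifts_top e a
  smul_mem' c l h := Lifts.mono (fun x hx => by simp_all) h
  add_mem' {l m} hl hm := by
    by_cases hle : LinearMap.ker l ≤ LinearMap.ker m
    · refine Lifts.mono (fun x hx => ?_) hl
      have := hle hx
      simp_all
    · obtain ⟨x, hxl, hxm⟩ := SetLike.not_le_iff_exists.1 hle
      rw [LinearMap.mem_ker] at hxl hxm
      refine (hl.inf hF (eq_top_iff.2 fun y _ => ?_) hm).mono fun y hy => ?_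
      · refine Submodule.mem_sup.2 ⟨(m y / m x) • x, by simp [hxl], y - (m y / m x) • x, ?_,
          by simp⟩
        simp [hxm]
      · simp_all

theorem mem_liftable {hF : IsDeformationFunctor F} {e : SmallExtension K} {a : F.obj e.A}
    {l : Module.Dual K e.J} : l ∈ liftable hF e a ↔ e.Lifts F a (LinearMap.ker l) := Iff.rfl

theorem existsUnique_pair (hF : IsDeformationFunctor F) (e₁ e₂ : SmallExtension K)
    (x : F.obj e₁.A) (y : F.obj e₂.A) : ∃! d : F.obj (prod e₁ e₂).A,
      F.map (fst e₁ e₂).αA d = x ∧ F.map (snd e₁ e₂).αA d = y :=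
  hF.eta_bijective _ _ _ _ (ArtinAlg.isFiberProductCone_prod e₁.A e₂.A) x y
    (hF.subsingleton_pt.elim _ _)

theorem map_prodLift_fst {e e₁ e₂ : SmallExtension K} (α : Mor e e₁) (β : Mor e e₂)
    (a : F.obj e.A) : F.map (fst e₁ e₂).αA (F.map (α.prodLift β).αA a) = F.map α.αA a := by
  rw [← F.map_comp_apply]; rfl

theorem map_prodLift_snd {e e₁ e₂ : SmallExtension K} (α : Mor e e₁) (β : Mor e e₂)
    (a : F.obj e.A) : F.map (snd e₁ e₂).αA (F.map (α.prodLift β).αA a) = F.map β.αA a := by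
  rw [← F.map_comp_apply]; rfl

theorem comp_sub_comp_mem_liftable (hF : IsDeformationFunctor F) {e₁ e₂ : SmallExtension K}
    (α β : Mor e₁ e₂) {a : F.obj e₁.A} (h : F.map α.αA a = F.map β.αA a)
    (l : Module.Dual K e₂.J) : l ∘ₗ α.ker - l ∘ₗ β.ker ∈ liftable hF e₁ a := by
  have hdiag : F.map (α.prodLift β).αA a =
      F.map ((Mor.id e₂).prodLift (Mor.id e₂)).αA (F.map α.αA a) := by
    refine (existsUnique_pair hF e₂ e₂ (F.map α.αA a) (F.map α.αA a)).unique
      ⟨map_prodLift_fst α β a, (map_prodLift_snd α β a).trans h.symm⟩ ⟨?_, ?_⟩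
    · exact (map_prodLift_fst _ _ _).trans (F.map_id_apply _ _)
    · exact (map_prodLift_snd _ _ _).trans (F.map_id_apply _ _)
  refine (lifts_ker_comp_iff hF (α.prodLift β) a
    (l ∘ₗ (fst e₂ e₂).ker - l ∘ₗ (snd e₂ e₂).ker)).2 ?_
  rw [hdiag, ← lifts_ker_comp_iff hF]
  convert! lifts_top e₂ (F.map α.αA a)
  exact LinearMap.ker_eq_top.2 (sub_self l)

end SmallExtension

namespace ArtinAlg

variable {K : Type u} [Field K]

/-- `Art_K` is essentially small. -/
theorem exists_skeleton (K : Type u) [Field K] :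
    ∃ (ι : Type u) (X : ι → ArtinAlg K),
      ∀ A : ArtinAlg K, ∃ (i : ι) (f : A ⟶ X i), Function.Bijective f := by
  let ι := Σ n : ℕ, {I : Ideal (MvPolynomial (Fin n) K) //
    ∃ A : ArtinAlg K, Nonempty (A.carrier ≃ₐ[K] MvPolynomial (Fin n) K ⧸ I)}
  have key (i : ι) : ∃ X : ArtinAlg K,
      Nonempty ((MvPolynomial (Fin i.1) K ⧸ i.2.1) ≃ₐ[K] X.carrier) := by
    obtain ⟨n, I, A, ⟨f⟩⟩ := i
    exact ⟨A, ⟨f.symm⟩⟩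
  choose X hX using key
  refine ⟨ι, X, fun A => ?_⟩
  obtain ⟨n, f, hf⟩ := Algebra.FiniteType.iff_quotient_mvPolynomial''.1
    (inferInstance : Algebra.FiniteType K A.carrier)
  let g := Ideal.quotientKerAlgEquivOfSurjective hf
  let i : ι := ⟨n, RingHom.ker f, A, ⟨g.symm⟩⟩
  obtain ⟨h⟩ := hX i
  exact ⟨i, ofAlgHom (g.symm.trans h : A.carrier →ₐ[K] (X i).carrier), (g.symm.trans h).bijective⟩

end ArtinAlg

namespace SmallExtension

variable {K : Type u} [Field K]

theorem exists_mor_of_bijective (e : SmallExtension K) {B A : ArtinAlg K} (f : e.B ⟶ B)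
    (hf : Function.Bijective f) (g : e.A ⟶ A) (hg : Function.Bijective g) :
    ∃ (π : B ⟶ A) (surj : Function.Surjective π)
      (small : ∀ x : B, π x = 0 → ∀ y : B, B.aug y = 0 → y * x = 0)
      (hc : f ≫ π = e.π ≫ g),
      Function.Injective (Mor.ker (e₂ := ofAugSmall B A π surj small) ⟨f, g, hc⟩) := by
  obtain ⟨π, hπ⟩ := ArtinAlg.exists_desc f hf.2 (e.π ≫ g) fun x hx => by
    rw [hf.1 (hx.trans (map_zero f).symm), map_zero]
  refine ⟨π, fun a => ?_, fun x hx y hy => ?_, hπ, fun x y hxy => ?_⟩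
  · obtain ⟨a, rfl⟩ := hg.2 a
    obtain ⟨b, rfl⟩ := e.surj a
    exact ⟨f b, DFunLike.congr_fun hπ b⟩
  · obtain ⟨x, rfl⟩ := hf.2 x
    obtain ⟨y, rfl⟩ := hf.2 y
    have hx' : e.π x = 0 :=
      hg.1 (((DFunLike.congr_fun hπ x).symm.trans hx).trans (map_zero g).symm)
    rw [ArtinAlg.aug_map] at hy
    rw [← map_mul, e.mul_eq_aug_smul y hx', hy, zero_smul, map_zero]
  · exact Subtype.ext (hf.1 (congrArg Subtype.val hxy))

end SmallExtension

section

open SmallExtension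

variable {K : Type u} [Field K]

/-- A small extension together with an element of `F(A)`. -/
structure PointedExtension (F : ArtinAlg K ⥤ Type u) where
  ext : SmallExtension K
  pt : F.obj ext.A

namespace PointedExtension

variable {F : ArtinAlg K ⥤ Type u}

instance : Preorder (PointedExtension F) where
  le p q := ∃ α : Mor q.ext p.ext, F.map α.αA q.pt = p.pt
  le_refl p := ⟨Mor.id p.ext, F.map_id_apply _ _⟩
  le_trans p q r := by
    rintro ⟨α, hα⟩ ⟨β, hβ⟩
    exact ⟨β.comp α, by rw [Mor.comp, F.map_comp_apply, hβ, hα]⟩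

theorem isDirectedOrder (hF : IsDeformationFunctor F) : IsDirectedOrder (PointedExtension F) where
  directed p q := by
    obtain ⟨d, ⟨h₁, h₂⟩, -⟩ := existsUnique_pair hF p.ext q.ext p.pt q.pt
    exact ⟨⟨SmallExtension.prod p.ext q.ext, d⟩, ⟨fst _ _, h₁⟩, ⟨snd _ _, h₂⟩⟩

/-- The obstruction functionals of a pointed extension. -/
abbrev Obs (hF : IsDeformationFunctor F) (p : PointedExtension F) : Type u :=
  Module.Dual K p.ext.J ⧸ liftable hF p.ext p.pt

/-- The map of obstruction functionals induced by a morphism. -/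
def obsMap (hF : IsDeformationFunctor F) {p q : PointedExtension F} (α : Mor q.ext p.ext)
    (h : F.map α.αA q.pt = p.pt) : Obs hF p →ₗ[K] Obs hF q :=
  Submodule.mapQ _ _ α.ker.dualMap fun l hl => by
    rw [mem_liftable, ← h] at hl
    exact (lifts_ker_comp_iff hF α q.pt l).2 hl

theorem obsMap_mk (hF : IsDeformationFunctor F) {p q : PointedExtension F} (α : Mor q.ext p.ext)
    (h : F.map α.αA q.pt = p.pt) (l : Module.Dual K p.ext.J) :
    obsMap hF α h (Submodule.Quotient.mk l) = Submodule.Quotient.mk (l ∘ₗ α.ker) := rfl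

theorem obsMap_injective (hF : IsDeformationFunctor F) {p q : PointedExtension F}
    (α : Mor q.ext p.ext) (h : F.map α.αA q.pt = p.pt) : Function.Injective (obsMap hF α h) := by
  refine (injective_iff_map_eq_zero _).2 fun x hx => ?_
  obtain ⟨l, rfl⟩ := Submodule.Quotient.mk_surjective _ x
  rw [obsMap_mk, Submodule.Quotient.mk_eq_zero, mem_liftable, lifts_ker_comp_iff hF, h] at hx
  exact (Submodule.Quotient.mk_eq_zero _).2 hx

theorem obsMap_eq (hF : IsDeformationFunctor F) {p q : PointedExtension F}
    (α β : Mor q.ext p.ext) (hα : F.map α.αA q.pt = p.pt) (hβ : F.map β.αA q.pt = p.pt) :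
    obsMap hF α hα = obsMap hF β hβ := by
  ext l : 2
  exact (Submodule.Quotient.eq _).2 (comp_sub_comp_mem_liftable hF α β (hα.trans hβ.symm) l)

/-- The transition maps of the system of obstruction functionals. -/
noncomputable def trans (hF : IsDeformationFunctor F) (p q : PointedExtension F) (h : p ≤ q) :
    Obs hF p →ₗ[K] Obs hF q :=
  obsMap hF h.choose h.choose_spec

theorem trans_eq (hF : IsDeformationFunctor F) {p q : PointedExtension F} (α : Mor q.ext p.ext)
    (h : F.map α.αA q.pt = p.pt) : trans hF p q ⟨α, h⟩ = obsMap hF α h :=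
  obsMap_eq hF _ _ _ _

theorem directedSystem (hF : IsDeformationFunctor F) :
    DirectedSystem (Obs hF) (trans hF · · ·) where
  map_self p x := by
    rw [trans_eq hF (Mor.id p.ext) (F.map_id_apply _ _)]
    obtain ⟨l, rfl⟩ := Submodule.Quotient.mk_surjective _ x
    rfl
  map_map r q p := by
    rintro ⟨α, hα⟩ ⟨β, hβ⟩ x
    have h : F.map (β.comp α).αA r.pt = p.pt := by rw [Mor.comp, F.map_comp_apply, hβ, hα]
    rw [trans_eq hF α hα, trans_eq hF β hβ, trans_eq hF (β.comp α) h]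
    obtain ⟨l, rfl⟩ := Submodule.Quotient.mk_surjective _ x
    rfl

open Classical in
/-- The colimit of the spaces of obstruction functionals. -/
def Limit (hF : IsDeformationFunctor F) : Type (u + 1) :=
  Module.DirectLimit (Obs hF) (trans hF)

open Classical in
noncomputable instance (hF : IsDeformationFunctor F) : AddCommMonoid (Limit hF) :=
  inferInstanceAs (AddCommMonoid (Module.DirectLimit (Obs hF) (trans hF)))

open Classical in
noncomputable instance (hF : IsDeformationFunctor F) : Module K (Limit hF) :=
  inferInstanceAs (Module K (Module.DirectLimit (Obs hF) (trans hF)))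

noncomputable instance (hF : IsDeformationFunctor F) : AddCommGroup (Limit hF) :=
  Module.addCommMonoidToAddCommGroup K

open Classical in
/-- The class in the colimit of a functional on the kernel of a small extension. -/
noncomputable def toLimit (hF : IsDeformationFunctor F) (p : PointedExtension F) :
    Module.Dual K p.ext.J →ₗ[K] Limit hF :=
  Module.DirectLimit.of K _ (Obs hF) (trans hF) p ∘ₗ Submodule.mkQ _

open Classical in
theorem toLimit_eq (hF : IsDeformationFunctor F) {p q : PointedExtension F} (α : Mor q.ext p.ext)
    (h : F.map α.αA q.pt = p.pt) (l : Module.Dual K p.ext.J) :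
    toLimit hF p l = toLimit hF q (l ∘ₗ α.ker) := by
  have key := Module.DirectLimit.of_f (R := K) (f := trans hF)
    (hij := (⟨α, h⟩ : p ≤ q)) (x := Submodule.Quotient.mk l)
  rw [trans_eq hF α h, obsMap_mk] at key
  exact key.symm

open Classical in
theorem toLimit_eq_zero_iff (hF : IsDeformationFunctor F) {p : PointedExtension F}
    {l : Module.Dual K p.ext.J} :
    toLimit hF p l = 0 ↔ p.ext.Lifts F p.pt (LinearMap.ker l) := by
  have := isDirectedOrder hF
  have := directedSystem hF
  rw [← mem_liftable (hF := hF), ← Submodule.Quotient.mk_eq_zero]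
  constructor
  · intro h
    obtain ⟨q, ⟨α, hα⟩, hq⟩ := Module.DirectLimit.of.zero_exact h
    rw [trans_eq hF α hα] at hq
    exact obsMap_injective hF α hα (hq.trans (map_zero _).symm)
  · intro h
    exact (congrArg (Module.DirectLimit.of K _ (Obs hF) (trans hF) p) h).trans (map_zero _)

theorem nonempty_pointedExtension (hF : IsDeformationFunctor F) : Nonempty (PointedExtension F) := by
  obtain ⟨x⟩ := hF.nonempty_pt
  exact ⟨⟨ofAugSmall (ArtinAlg.self K) (ArtinAlg.self K) (𝟙 _) (fun a => ⟨a, rfl⟩)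
      fun a ha b _ => by rw [show a = 0 from ha, mul_zero], x⟩⟩

open Classical in
theorem exists_toLimit (hF : IsDeformationFunctor F) (v : Limit hF) :
    ∃ p l, toLimit hF p l = v := by
  have := isDirectedOrder hF
  have := nonempty_pointedExtension hF
  obtain ⟨p, x, rfl⟩ := Module.DirectLimit.exists_of v
  obtain ⟨l, rfl⟩ := Submodule.Quotient.mk_surjective _ x
  exact ⟨p, l, rfl⟩

open Classical in
theorem exists_limit_desc (hF : IsDeformationFunctor F) {W : Type u} [AddCommGroup W] [Module K W]
    (θ : ∀ p : PointedExtension F, Module.Dual K p.ext.J →ₗ[K] W)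
    (hθ : ∀ (p q : PointedExtension F) (α : Mor q.ext p.ext) (_ : F.map α.αA q.pt = p.pt)
      (l : Module.Dual K p.ext.J), θ p l = θ q (l ∘ₗ α.ker))
    (hθ₀ : ∀ (p : PointedExtension F) (l : Module.Dual K p.ext.J),
      p.ext.Lifts F p.pt (LinearMap.ker l) → θ p l = 0) :
    ∃ ψ : Limit hF →ₗ[K] W, ∀ p l, ψ (toLimit hF p l) = θ p l := by
  let g (p : PointedExtension F) : Obs hF p →ₗ[K] W :=
    Submodule.liftQ _ (θ p) fun l hl => hθ₀ p l hl
  have hg (p q : PointedExtension F) (h : p ≤ q) (x : Obs hF p) :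
      g q (trans hF p q h x) = g p x := by
    obtain ⟨α, hα⟩ := h
    rw [trans_eq hF α hα]
    obtain ⟨l, rfl⟩ := Submodule.Quotient.mk_surjective _ x
    exact (hθ p q α hα l).symm
  exact ⟨Module.DirectLimit.lift K _ (Obs hF) (trans hF) g hg,
    fun p l => Module.DirectLimit.lift_of g hg _⟩

theorem exists_toLimit_skeleton (hF : IsDeformationFunctor F) {ι : Type u} {X : ι → ArtinAlg K}
    (hX : ∀ A : ArtinAlg K, ∃ (i : ι) (f : A ⟶ X i), Function.Bijective f) (v : Limit hF) :
    ∃ (i j : ι) (π : X i ⟶ X j) (h₁ : Function.Surjective π)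
      (h₂ : ∀ x : X i, π x = 0 → ∀ y : X i, (X i).aug y = 0 → y * x = 0) (x : F.obj (X j))
      (l : Module.Dual K (ofAugSmall (X i) (X j) π h₁ h₂).J),
      toLimit hF ⟨ofAugSmall (X i) (X j) π h₁ h₂, x⟩ l = v := by
  obtain ⟨p, l, hl⟩ := exists_toLimit hF v
  obtain ⟨i, f, hf⟩ := hX p.ext.B
  obtain ⟨j, g, hg⟩ := hX p.ext.A
  obtain ⟨π, h₁, h₂, hc, hinj⟩ := p.ext.exists_mor_of_bijective f hf g hg
  obtain ⟨r, hr⟩ := LinearMap.exists_leftInverse_of_injective _ (LinearMap.ker_eq_bot.2 hinj)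
  refine ⟨i, j, π, h₁, h₂, F.map g p.pt, l ∘ₗ r, ?_⟩
  have key := toLimit_eq hF (p := ⟨ofAugSmall (X i) (X j) π h₁ h₂, F.map g p.pt⟩) (q := p)
    ⟨f, g, hc⟩ rfl (l ∘ₗ r)
  rw [LinearMap.comp_assoc, hr, LinearMap.comp_id] at key
  exact key.trans hl

theorem small_limit (hF : IsDeformationFunctor F) : Small.{u} (Limit hF) := by
  obtain ⟨ι, X, hX⟩ := ArtinAlg.exists_skeleton K
  let S := Σ (i j : ι) (π : {π : X i ⟶ X j // Function.Surjective π ∧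
      ∀ x : X i, π x = 0 → ∀ y : X i, (X i).aug y = 0 → y * x = 0}), F.obj (X j) ×
      Module.Dual K (ofAugSmall (X i) (X j) π.1 π.2.1 π.2.2).J
  let f (s : S) : Limit hF := toLimit hF
    ⟨ofAugSmall (X s.1) (X s.2.1) s.2.2.1.1 s.2.2.1.2.1 s.2.2.1.2.2, s.2.2.2.1⟩ s.2.2.2.2
  have hf : Function.Surjective f := fun v => by
    have h := exists_toLimit_skeleton hF hX v
    exact h.elim fun i h => h.elim fun j h => h.elim fun π h => h.elim fun h₁ h =>
      h.elim fun h₂ h => h.elim fun x h => h.elim fun l h => ⟨⟨i, j, ⟨π, h₁, h₂⟩, x, l⟩, h⟩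
  exact small_of_surjective hf

/-- The universal obstruction space, a model of the colimit in the universe of `K`. -/
def Space (hF : IsDeformationFunctor F) : Type u :=
  haveI := small_limit hF
  Shrink.{u} (Limit hF)

noncomputable instance (hF : IsDeformationFunctor F) : AddCommGroup (Space hF) :=
  haveI := small_limit hF
  inferInstanceAs (AddCommGroup (Shrink.{u} (Limit hF)))

noncomputable instance (hF : IsDeformationFunctor F) : Module K (Space hF) :=
  haveI := small_limit hF
  inferInstanceAs (Module K (Shrink.{u} (Limit hF)))

/-- The obstruction space is isomorphic to the colimit. -/
noncomputable def limitEquiv (hF : IsDeformationFunctor F) : Limit hF ≃ₗ[K] Space hF :=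
  haveI := small_limit hF
  (Shrink.linearEquiv K (Limit hF)).symm

/-- The class in the obstruction space of a functional on the kernel of a small extension. -/
noncomputable def toSpace (hF : IsDeformationFunctor F) (p : PointedExtension F) :
    Module.Dual K p.ext.J →ₗ[K] Space hF :=
  (limitEquiv hF).toLinearMap ∘ₗ toLimit hF p

theorem toSpace_eq (hF : IsDeformationFunctor F) {p q : PointedExtension F} (α : Mor q.ext p.ext)
    (h : F.map α.αA q.pt = p.pt) (l : Module.Dual K p.ext.J) :
    toSpace hF p l = toSpace hF q (l ∘ₗ α.ker) :=
  congrArg (limitEquiv hF) (toLimit_eq hF α h l)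

theorem toSpace_eq_zero_iff (hF : IsDeformationFunctor F) {p : PointedExtension F}
    {l : Module.Dual K p.ext.J} :
    toSpace hF p l = 0 ↔ p.ext.Lifts F p.pt (LinearMap.ker l) :=
  (LinearEquiv.map_eq_zero_iff (limitEquiv hF)).trans (toLimit_eq_zero_iff hF)

theorem exists_toSpace (hF : IsDeformationFunctor F) (v : Space hF) :
    ∃ p l, toSpace hF p l = v := by
  obtain ⟨p, l, h⟩ := exists_toLimit hF ((limitEquiv hF).symm v)
  exact ⟨p, l, (limitEquiv hF).symm_apply_eq.1 h.symm |>.symm⟩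

theorem exists_space_desc (hF : IsDeformationFunctor F) {W : Type u} [AddCommGroup W] [Module K W]
    (θ : ∀ p : PointedExtension F, Module.Dual K p.ext.J →ₗ[K] W)
    (hθ : ∀ (p q : PointedExtension F) (α : Mor q.ext p.ext) (_ : F.map α.αA q.pt = p.pt)
      (l : Module.Dual K p.ext.J), θ p l = θ q (l ∘ₗ α.ker))
    (hθ₀ : ∀ (p : PointedExtension F) (l : Module.Dual K p.ext.J),
      p.ext.Lifts F p.pt (LinearMap.ker l) → θ p l = 0) :
    ∃ ψ : Space hF →ₗ[K] W, ∀ p l, ψ (toSpace hF p l) = θ p l := by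
  obtain ⟨ψ, hψ⟩ := exists_limit_desc hF θ hθ hθ₀
  refine ⟨ψ ∘ₗ (limitEquiv hF).symm.toLinearMap, fun p l => ?_⟩
  rw [← hψ, LinearMap.comp_apply, toSpace, LinearMap.comp_apply, LinearEquiv.coe_coe,
    LinearEquiv.coe_coe, LinearEquiv.symm_apply_apply]

end PointedExtension

/-- Contraction of a tensor in `V ⊗ J` against a functional on `J`. -/
noncomputable def contract {K V J : Type u} [Field K] [AddCommGroup V] [Module K V]
    [AddCommGroup J] [Module K J] (t : TensorProduct K V J) : Module.Dual K J →ₗ[K] V :=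
  (TensorProduct.rid K V).toLinearMap ∘ₗ LinearMap.applyₗ t ∘ₗ LinearMap.lTensorHom V

section contract

variable {K V W J J' : Type u} [Field K] [AddCommGroup V] [Module K V] [AddCommGroup W] [Module K W]
  [AddCommGroup J] [Module K J] [AddCommGroup J'] [Module K J']

theorem contract_apply (t : TensorProduct K V J) (l : Module.Dual K J) :
    contract t l = TensorProduct.rid K V (LinearMap.lTensor V l t) := rfl

theorem contract_tmul (v : V) (x : J) (l : Module.Dual K J) :
    contract (v ⊗ₜ[K] x) l = l x • v := by
  rw [contract_apply, LinearMap.lTensor_tmul, TensorProduct.rid_tmul]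

theorem contract_add (s t : TensorProduct K V J) : contract (s + t) = contract s + contract t := by
  ext l
  simp only [contract_apply, LinearMap.add_apply, map_add]

theorem contract_zero : contract (0 : TensorProduct K V J) = 0 := by
  ext l
  simp only [contract_apply, LinearMap.zero_apply, map_zero]

theorem contract_lTensor (f : J →ₗ[K] J') (t : TensorProduct K V J) (l : Module.Dual K J') :
    contract (LinearMap.lTensor V f t) l = contract t (l ∘ₗ f) := by
  rw [contract_apply, contract_apply, LinearMap.lTensor_comp_apply]

theorem contract_rTensor (ψ : V →ₗ[K] W) (t : TensorProduct K V J) (l : Module.Dual K J) :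
    contract (LinearMap.rTensor J ψ t) l = ψ (contract t l) := by
  induction t with
  | zero => simp only [map_zero, contract_zero, LinearMap.zero_apply]
  | tmul v x => rw [LinearMap.rTensor_tmul, contract_tmul, contract_tmul, map_smul]
  | add s t hs ht => simp only [map_add, contract_add, LinearMap.add_apply, hs, ht]

variable [Module.Finite K J]

theorem sum_contract_tmul (t : TensorProduct K V J) :
    ∑ i, contract t ((Module.finBasis K J).coord i) ⊗ₜ[K] Module.finBasis K J i = t := by
  induction t with
  | zero => simp only [contract_zero, LinearMap.zero_apply, TensorProduct.zero_tmul,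
      Finset.sum_const_zero]
  | tmul v x =>
    simp only [contract_tmul, TensorProduct.smul_tmul, Module.Basis.coord_apply]
    rw [← TensorProduct.tmul_sum, Module.Basis.sum_repr]
  | add s t hs ht =>
    simp only [contract_add, LinearMap.add_apply, TensorProduct.add_tmul, Finset.sum_add_distrib,
      hs, ht]

theorem contract_injective : Function.Injective (contract (K := K) (V := V) (J := J)) :=
  fun s t h => by rw [← sum_contract_tmul s, h, sum_contract_tmul]

theorem contract_surjective : Function.Surjective (contract (K := K) (V := V) (J := J)) := by
  intro φ
  refine ⟨∑ i, φ ((Module.finBasis K J).coord i) ⊗ₜ[K] Module.finBasis K J i, ?_⟩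
  refine (Module.finBasis K J).dualBasis.ext fun j => ?_
  rw [contract_apply, map_sum, map_sum]
  simp [Finsupp.single_apply]

end contract

namespace PointedExtension

variable {F : ArtinAlg K ⥤ Type u}

/-- The obstruction theory with values in the universal obstruction space. -/
noncomputable abbrev obstructionTheory (hF : IsDeformationFunctor F) : ObstructionTheory F where
  V := Space hF
  ob e a := (contract_surjective (toSpace hF ⟨e, a⟩)).choose
  ob_eq_zero_of_lifts e a h := by
    apply contract_injective
    rw [(contract_surjective (toSpace hF ⟨e, a⟩)).choose_spec, contract_zero]
    ext l
    exact (toSpace_eq_zero_iff hF).2 (lifts_of_exists h _)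
  base_change e₁ e₂ αB αA hc a := by
    apply contract_injective
    ext l
    rw [contract_lTensor, (contract_surjective (toSpace hF ⟨e₁, a⟩)).choose_spec,
      (contract_surjective (toSpace hF ⟨e₂, F.map αA a⟩)).choose_spec]
    exact toSpace_eq hF (p := ⟨e₂, F.map αA a⟩) (q := ⟨e₁, a⟩) ⟨αB, αA, hc⟩ rfl l

theorem contract_ob (hF : IsDeformationFunctor F) (e : SmallExtension K) (a : F.obj e.A) :
    contract ((obstructionTheory hF).ob e a) = toSpace hF ⟨e, a⟩ :=
  (contract_surjective (toSpace hF ⟨e, a⟩)).choose_spec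

end PointedExtension

open PointedExtension

theorem SmallExtension.exists_comp_toQuot_ker (e : SmallExtension K) (l : Module.Dual K e.J) :
    ∃ l' : Module.Dual K (e.quot (LinearMap.ker l)).J,
      l' ∘ₗ (e.toQuot (LinearMap.ker l)).ker = l := by
  obtain ⟨s, hs⟩ := LinearMap.exists_rightInverse_of_surjective _
    (LinearMap.range_eq_top.2 (e.toQuot_ker_surjective (LinearMap.ker l)))
  refine ⟨l ∘ₗ s, LinearMap.ext fun x => ?_⟩
  have hx : s ((e.toQuot (LinearMap.ker l)).ker x) - x ∈ LinearMap.ker l :=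
    (ker_toQuot_ker e (LinearMap.ker l)).le <| by
      rw [LinearMap.mem_ker, map_sub, sub_eq_zero]
      exact LinearMap.congr_fun hs _
  rw [LinearMap.mem_ker, map_sub, sub_eq_zero] at hx
  exact hx

variable {F : ArtinAlg K ⥤ Type u}

theorem ObstructionTheory.contract_ob_eq_zero (OT : ObstructionTheory F) {e : SmallExtension K}
    {a : F.obj e.A} {l : Module.Dual K e.J} (h : e.Lifts F a (LinearMap.ker l)) :
    contract (OT.ob e a) l = 0 := by
  obtain ⟨l', hl'⟩ := e.exists_comp_toQuot_ker l
  have hb := OT.base_change e (e.quot (LinearMap.ker l)) (e.toQuot _).αB (e.toQuot _).αA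
    (e.toQuot _).hc a
  have hz := OT.ob_eq_zero_of_lifts (e.quot (LinearMap.ker l)) (F.map (e.toQuot _).αA a)
    (h.imp fun c hc => hc.trans (F.map_id_apply _ _).symm)
  rw [← hl']
  refine (contract_lTensor (e.toQuot _).ker (OT.ob e a) l').symm.trans ?_
  refine (congrArg (fun t => contract t l') (hz.symm.trans hb)).symm.trans ?_
  rw [contract_zero, LinearMap.zero_apply]

theorem existsUnique_isMorphism (hF : IsDeformationFunctor F) (OT : ObstructionTheory F) :
    ∃! ψ : (obstructionTheory hF).V →ₗ[K] OT.V,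
      ObstructionTheory.IsMorphism (obstructionTheory hF) OT ψ := by
  obtain ⟨ψ, hψ⟩ := exists_space_desc hF (fun p => contract (OT.ob p.ext p.pt))
    (fun p q α h l => by
      rw [← h, OT.base_change q.ext p.ext α.αB α.αA α.hc]
      exact contract_lTensor _ _ _)
    fun p l h => OT.contract_ob_eq_zero h
  refine ⟨ψ, fun e a => ?_, fun χ hχ => LinearMap.ext fun v => ?_⟩
  · apply contract_injective
    ext l
    rw [contract_rTensor, contract_ob]
    exact (hψ ⟨e, a⟩ l).symm
  · obtain ⟨p, l, rfl⟩ := exists_toSpace hF v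
    rw [hψ, hχ p.ext p.pt, contract_rTensor, contract_ob]

theorem obstructionTheory_complete (hF : IsDeformationFunctor F) :
    (obstructionTheory hF).Complete := fun e a h => by
  refine exists_of_forall_lifts_ker hF fun l => ?_
  refine (toSpace_eq_zero_iff hF (p := ⟨e, a⟩)).1 ?_
  rw [← contract_ob, h, contract_zero, LinearMap.zero_apply]

/-- The trivial extension `0 → K → K[ε] → K → 0`. -/
noncomputable def dualNumberExtension (K : Type u) [Field K] : SmallExtension K :=
  haveI : Module.Finite K (DualNumber K) := inferInstanceAs (Module.Finite K (K × K))
  { B := ArtinAlg.ofAug (DualNumber K) (TrivSqZeroExt.fstHom K K K) fun x hx =>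
      TrivSqZeroExt.isUnit_iff_isUnit_fst.2 (IsUnit.mk0 _ hx)
    A := ArtinAlg.self K
    π := (TrivSqZeroExt.fstHom K K K : DualNumber K →ₐ[K] K)
    surj := fun a => ⟨(TrivSqZeroExt.inl a : DualNumber K), rfl⟩
    small := fun x hx y hy => by
      change DualNumber K at x y
      have hx : x.fst = 0 := hx
      have hy : y.fst = 0 := by
        by_contra h
        exact (IsLocalRing.mem_maximalIdeal _).1 hy
          (TrivSqZeroExt.isUnit_iff_isUnit_fst.2 (IsUnit.mk0 _ h))
      change y * x = 0
      ext
      · rw [TrivSqZeroExt.fst_mul, hx, mul_zero, TrivSqZeroExt.fst_zero]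
      · rw [TrivSqZeroExt.snd_mul, hx, hy, MulOpposite.op_zero, zero_smul, zero_smul, add_zero,
          TrivSqZeroExt.snd_zero] }

/-- The kernel of the trivial extension is one-dimensional. -/
noncomputable def dualNumberKernel (K : Type u) [Field K] : (dualNumberExtension K).J ≃ₗ[K] K :=
  LinearEquiv.ofBijective
    ((TrivSqZeroExt.sndHom K K : DualNumber K →ₗ[K] K) ∘ₗ (dualNumberExtension K).J.subtype) <| by
    constructor
    · rintro ⟨x, hx⟩ ⟨y, hy⟩ h
      exact Subtype.ext (TrivSqZeroExt.ext
        ((show TrivSqZeroExt.fst x = 0 from hx).trans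
          (show TrivSqZeroExt.fst y = 0 from hy).symm) h)
    · exact fun a => ⟨⟨(TrivSqZeroExt.inr a : DualNumber K), TrivSqZeroExt.fst_inr K a⟩, rfl⟩

theorem exists_ob_eq (hF : IsDeformationFunctor F) (v : (obstructionTheory hF).V) :
    ∃ (e : SmallExtension K) (a : F.obj e.A) (j : e.J ≃ₗ[K] K),
      TensorProduct.rid K _ (LinearMap.lTensor _ j.toLinearMap ((obstructionTheory hF).ob e a))
        = v := by
  suffices h : ∃ (e : SmallExtension K) (a : F.obj e.A) (j : e.J ≃ₗ[K] K),
      toSpace hF ⟨e, a⟩ j.toLinearMap = v by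
    obtain ⟨e, a, j, h⟩ := h
    exact ⟨e, a, j, (LinearMap.congr_fun (contract_ob hF e a) _).trans h⟩
  obtain ⟨p, l, rfl⟩ := exists_toSpace hF v
  by_cases hl : l = 0
  · obtain ⟨x⟩ := hF.nonempty_pt
    refine ⟨dualNumberExtension K, x, dualNumberKernel K, ?_⟩
    rw [hl, map_zero]
    let i : ArtinAlg.self K ⟶ (dualNumberExtension K).B :=
      (TrivSqZeroExt.inlAlgHom K K K : K →ₐ[K] DualNumber K)
    exact (toSpace_eq_zero_iff hF).2 (lifts_of_exists ⟨F.map i x, hF.subsingleton_pt.elim _ _⟩ _)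
  · obtain ⟨l', hl'⟩ := p.ext.exists_comp_toQuot_ker l
    have hbij : Function.Bijective l' := by
      constructor
      · refine (injective_iff_map_eq_zero _).2 fun y hy => ?_
        obtain ⟨x, rfl⟩ := p.ext.toQuot_ker_surjective _ y
        rw [← LinearMap.comp_apply, hl', ← LinearMap.mem_ker,
          ← ker_toQuot_ker p.ext (LinearMap.ker l)] at hy
        exact hy
      · refine LinearMap.surjective fun h => hl ?_
        rw [← hl', h, LinearMap.zero_comp]
    refine ⟨p.ext.quot (LinearMap.ker l), p.pt, LinearEquiv.ofBijective l' hbij, ?_⟩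
    refine (toSpace_eq hF (p := ⟨p.ext.quot (LinearMap.ker l), p.pt⟩) (q := p)
      (p.ext.toQuot _) (F.map_id_apply _ _) l').trans ?_
    rw [hl']

end

/-- Every deformation functor `F` admits a universal obstruction theory
`(O_F, ob_e)`.  Moreover the universal obstruction theory is complete, and every element of
`O_F` is of the form `ob_e(a)` for some small extension `e : 0 → K → B → A → 0` with
one-dimensional kernel and some `a ∈ F(A)`. -/
theorem exists_universal_obstructionTheory {K : Type u} [Field K]
    (F : ArtinAlg K ⥤ Type u) (hF : IsDeformationFunctor F) :
    ∃ OT : ObstructionTheory F,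
      (∀ OT' : ObstructionTheory F,
        ∃! ψ : OT.V →ₗ[K] OT'.V, ObstructionTheory.IsMorphism OT OT' ψ) ∧
      OT.Complete ∧
      (∀ v : OT.V, ∃ (e : SmallExtension K) (a : F.obj e.A) (j : (↥e.J) ≃ₗ[K] K),
        (TensorProduct.rid K OT.V) ((LinearMap.lTensor OT.V j.toLinearMap) (OT.ob e a)) = v) := by
  exact ⟨PointedExtension.obstructionTheory hF, existsUnique_isMorphism hF,
    obstructionTheory_complete hF, exists_ob_eq hF⟩
end
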